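/- arXiv:2201.04062 — 3 statements merged into one kernel-verified Lean document; each statement's English description precedes it below -/
import Mathlib

section
/- Let c>0, and let H be a graph such that H and its complement H̄ both have congestion more than c. Then there is no ε>0 such that every graph G with |G|>1 that is both H-free and H̄-free has a pure pair A,B with |A|,|B| ≥ ε·|G|^{1-c}; that is, for every ε>0 there exists a graph G with |G|>1 that is H-free and H̄-free and has no pure pair A,B with |A|,|B| ≥ ε·|G|^{1-c}. -/
noncomputable section

namespace PurePairs

open SimpleGraph

variable {V W : Type*}

/-- A pure pair in `G`: a pair of disjoint vertex sets that are complete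
or anticomplete to each other. -/
def PurePair (G : SimpleGraph V) (A B : Set V) : Prop :=
  Disjoint A B ∧
    ((∀ a ∈ A, ∀ b ∈ B, G.Adj a b) ∨ (∀ a ∈ A, ∀ b ∈ B, ¬ G.Adj a b))

/-- `G` contains `H`: some induced subgraph of `G` is isomorphic to `H`. -/
def Contains (G : SimpleGraph V) (H : SimpleGraph W) : Prop :=
  Nonempty (H ↪g G)

/-- The congestion of a graph `H`: the maximum (here: supremum, together with `0`)
of `1 - (|J|-1)/|E(J)|` over all subgraphs `J` of `H` with at least one edge.
If `H` has no edges this is `0`. -/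
def congestion (H : SimpleGraph V) : ℝ :=
  sSup ({0} ∪ {x : ℝ | ∃ J : H.Subgraph, J.edgeSet.Nonempty ∧
    x = 1 - ((J.verts.ncard : ℝ) - 1) / (J.edgeSet.ncard : ℝ)})

/-- `A` is anticomplete to `B`: no edges between them. -/
def Anticomplete (G : SimpleGraph V) (A B : Set V) : Prop :=
  ∀ a ∈ A, ∀ b ∈ B, ¬ G.Adj a b

/-- `A` covers `B`: every vertex of `B` has a neighbour in `A`. -/
def Covers (G : SimpleGraph V) (A B : Set V) : Prop :=
  ∀ b ∈ B, ∃ a ∈ A, G.Adj a b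

/-- `G` is `ε`-sparse: every vertex has degree less than `ε|G|`. -/
def EpsSparse (G : SimpleGraph V) [Fintype V] (ε : ℝ) : Prop :=
  ∀ v : V, ((G.neighborSet v).ncard : ℝ) < ε * (Fintype.card V : ℝ)

/-- `G` is `(γ,δ)`-coherent: there is no pair of disjoint anticomplete sets `A`, `B`
with `|A| ≥ γ` and `|B| ≥ δ`. -/
def Coherent (G : SimpleGraph V) (γ δ : ℝ) : Prop :=
  ¬ ∃ A B : Set V, Disjoint A B ∧ Anticomplete G A B ∧
      γ ≤ (A.ncard : ℝ) ∧ δ ≤ (B.ncard : ℝ)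

/-- `N(X)`: the set of vertices with a neighbour in `X`. -/
def nbhd (G : SimpleGraph V) (X : Set V) : Set V :=
  {v | ∃ x ∈ X, G.Adj x v}

/-- A blockade: a family of nonempty pairwise disjoint vertex sets indexed by a
finite set of integers. -/
def IsBlockade (I : Finset ℤ) (A : ℤ → Set V) : Prop :=
  (∀ i ∈ I, (A i).Nonempty) ∧
    ∀ i ∈ I, ∀ j ∈ I, i ≠ j → Disjoint (A i) (A j)

/-- The blockade `(A i : i ∈ I)` is `(γ,δ)`-divergent. -/
def Divergent (G : SimpleGraph V) (I : Finset ℤ) (A : ℤ → Set V) (γ δ : ℝ) : Prop :=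
  ∃ i ∈ I, ∃ j ∈ I, i ≠ j ∧ ∃ X ⊆ A i, ∃ Y ⊆ A j,
    γ * ((A i).ncard : ℝ) ≤ (X.ncard : ℝ) ∧ δ * ((A j).ncard : ℝ) ≤ (Y.ncard : ℝ) ∧
    Anticomplete G X Y

/-- The blockade `(A i : i ∈ I)` is `τ`-expanding. -/
def Expanding (G : SimpleGraph V) (I : Finset ℤ) (A : ℤ → Set V) (τ : ℝ) : Prop :=
  ∀ i ∈ I, ∀ j ∈ I, i ≠ j → ∀ X ⊆ A i,
    min (τ * (X.ncard : ℝ) / ((A i).ncard : ℝ)) (1/4)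
      ≤ (((nbhd G X) ∩ A j).ncard : ℝ) / ((A j).ncard : ℝ)

/-- The linkage of the blockade `(A i : i ∈ I)` is at most `lam`. -/
def LinkageLE (G : SimpleGraph V) (I : Finset ℤ) (A : ℤ → Set V) (lam : ℝ) : Prop :=
  ∀ i ∈ I, ∀ j ∈ I, i ≠ j → ∀ v ∈ A i,
    ((G.neighborSet v ∩ A j).ncard : ℝ) ≤ lam * ((A j).ncard : ℝ)

/-- The shrinkage of the blockade `(A i : i ∈ I)` is at most `σ`, i.e. its width is at
least `|G|^{1-σ}`. -/
def ShrinkageLE [Fintype V] (I : Finset ℤ) (A : ℤ → Set V) (σ : ℝ) : Prop :=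
  ∀ i ∈ I, (Fintype.card V : ℝ) ^ (1 - σ) ≤ ((A i).ncard : ℝ)

/-- `(L 0, …, L k)` is a levelling in `G`. -/
def IsLevelling (G : SimpleGraph V) (L : ℕ → Set V) (k : ℕ) : Prop :=
  1 ≤ k ∧ (L 0).ncard = 1 ∧
  (∀ i ≤ k, ∀ j ≤ k, i ≠ j → Disjoint (L i) (L j)) ∧
  (∀ i, 1 ≤ i → i ≤ k → Covers G (L (i-1)) (L i)) ∧
  (∀ i, 2 ≤ i → i ≤ k → ∀ h, h + 2 ≤ i → Anticomplete G (L h) (L i))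

/-- The levelling `(L 0, …, L k)` reaches `C`, i.e. `(L 0, …, L k, C)` is a levelling. -/
def Reaches (G : SimpleGraph V) (L : ℕ → Set V) (k : ℕ) (C : Set V) : Prop :=
  IsLevelling G (fun i => if i = k + 1 then C else L i) (k + 1)

/-- The levelling `(L 0, …, L k)` is `(B i : i ∈ I)`-rainbow. -/
def RainbowLevelling (I : Finset ℤ) (B : ℤ → Set V) (L : ℕ → Set V) (k : ℕ) : Prop :=
  ∃ q : ℕ → ℤ, (∀ i ≤ k, q i ∈ I ∧ L i ⊆ B (q i)) ∧
    ∀ i ≤ k, ∀ j ≤ k, q i = q j → i = j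

/-- The levelling `(L 0, …, L k)` grades the blockade `(C j : j ∈ J)` (in some order). -/
def Grades (G : SimpleGraph V) (L : ℕ → Set V) (k : ℕ) (J : Finset ℤ) (C : ℤ → Set V) :
    Prop :=
  Reaches G L k (⋃ j ∈ J, C j) ∧
  ∃ e : ℕ → ℤ, (∀ g < J.card, e g ∈ J) ∧
    (∀ g < J.card, ∀ h < J.card, e g = e h → g = h) ∧
    ∀ g < J.card, ∃ Y ⊆ L k,
      (∀ h, g ≤ h → h < J.card → Covers G Y (C (e h))) ∧
      (∀ h, h < g → Anticomplete G Y (C (e h)))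

/-- The levelling `(L 0, …, L k)` grades the blockade `(C j : j ∈ J)` forwards. -/
def GradesFwd (G : SimpleGraph V) (L : ℕ → Set V) (k : ℕ) (J : Finset ℤ) (C : ℤ → Set V) :
    Prop :=
  Reaches G L k (⋃ j ∈ J, C j) ∧
  ∀ j ∈ J, ∃ Y ⊆ L k,
    (∀ i ∈ J, j ≤ i → Covers G Y (C i)) ∧
    (∀ i ∈ J, i < j → Anticomplete G Y (C i))

/-- The levelling `(L 0, …, L k)` grades the blockade `(C j : j ∈ J)` backwards. -/
def GradesBwd (G : SimpleGraph V) (L : ℕ → Set V) (k : ℕ) (J : Finset ℤ) (C : ℤ → Set V) :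
    Prop :=
  Reaches G L k (⋃ j ∈ J, C j) ∧
  ∀ j ∈ J, ∃ Y ⊆ L k,
    (∀ i ∈ J, i ≤ j → Covers G Y (C i)) ∧
    (∀ i ∈ J, j < i → Anticomplete G Y (C i))

/-- Two levellings are parallel. -/
def Parallel (G : SimpleGraph V) (L : ℕ → Set V) (k : ℕ) (M : ℕ → Set V) (m : ℕ) : Prop :=
  L 0 = M 0 ∧
  Disjoint (⋃ j ∈ Finset.Icc 1 m, M j) (⋃ i ∈ Finset.Icc 1 k, L i) ∧
  Anticomplete G (⋃ j ∈ Finset.Icc 1 m, M j) (⋃ i ∈ Finset.Icc 1 k, L i)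

/-- `(L, M, C)` is a bi-levelling, where `L` has height `k` and `M` has height `m`:
`C` is a blockade, `L, M` are parallel levellings both reaching the union of the
blocks of `C`, and `L` grades `C` forwards. Its height is `k + m` and its length is
the length of `C`. -/
def IsBiLevelling (G : SimpleGraph V) (L : ℕ → Set V) (k : ℕ) (M : ℕ → Set V) (m : ℕ)
    (J : Finset ℤ) (C : ℤ → Set V) : Prop :=
  IsBlockade J C ∧ IsLevelling G L k ∧ IsLevelling G M m ∧ Parallel G L k M m ∧
    Reaches G M m (⋃ j ∈ J, C j) ∧ GradesFwd G L k J C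

/-- A bi-grading: a bi-levelling in which `M` also grades `C` backwards. -/
def IsBiGrading (G : SimpleGraph V) (L : ℕ → Set V) (k : ℕ) (M : ℕ → Set V) (m : ℕ)
    (J : Finset ℤ) (C : ℤ → Set V) : Prop :=
  IsBiLevelling G L k M m J C ∧ GradesBwd G M m J C

/-- The bi-levelling `(L, M, C)` is `(A i : i ∈ I)`-rainbow: each block of `C`, each
level of `L`, and each level of `M` other than `M 0 = L 0` is included in a block of
`A`, and distinct such sets lie in distinct blocks. -/
def RainbowBiLevelling (I : Finset ℤ) (A : ℤ → Set V)
    (L : ℕ → Set V) (k : ℕ) (M : ℕ → Set V) (m : ℕ)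
    (J : Finset ℤ) (C : ℤ → Set V) : Prop :=
  ∃ (qc : ℤ → ℤ) (ql qm : ℕ → ℤ),
    (∀ j ∈ J, qc j ∈ I ∧ C j ⊆ A (qc j)) ∧
    (∀ i ≤ k, ql i ∈ I ∧ L i ⊆ A (ql i)) ∧
    (∀ i, 1 ≤ i → i ≤ m → qm i ∈ I ∧ M i ⊆ A (qm i)) ∧
    (∀ j ∈ J, ∀ j' ∈ J, qc j = qc j' → j = j') ∧
    (∀ i ≤ k, ∀ i' ≤ k, ql i = ql i' → i = i') ∧
    (∀ i, 1 ≤ i → i ≤ m → ∀ i', 1 ≤ i' → i' ≤ m → qm i = qm i' → i = i') ∧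
    (∀ j ∈ J, ∀ i ≤ k, qc j ≠ ql i) ∧
    (∀ j ∈ J, ∀ i, 1 ≤ i → i ≤ m → qc j ≠ qm i) ∧
    (∀ i ≤ k, ∀ i', 1 ≤ i' → i' ≤ m → ql i ≠ qm i')

/-- Each block of `(C j : j ∈ J)` lies in a block of `(A i : i ∈ I)`; the `A`-size of
`C` is at least `η` when every block of `C` has size at least `η` times the size of the
block of `A` containing it. -/
def SizeGE (I : Finset ℤ) (A : ℤ → Set V) (J : Finset ℤ) (C : ℤ → Set V) (η : ℝ) : Prop :=
  ∀ j ∈ J, ∀ i ∈ I, C j ⊆ A i → η * ((A i).ncard : ℝ) ≤ ((C j).ncard : ℝ)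

/-- A `(B i : i ∈ I)`-rainbow induced path `p 0 - p 1 - ⋯ - p n` in `G`. -/
def RainbowPath (G : SimpleGraph V) (I : Finset ℤ) (B : ℤ → Set V)
    (n : ℕ) (p : ℕ → V) : Prop :=
  (∀ i ≤ n, ∀ j ≤ n, p i = p j → i = j) ∧
  (∀ i < n, G.Adj (p i) (p (i+1))) ∧
  (∀ i j, i + 1 < j → j ≤ n → ¬ G.Adj (p i) (p j)) ∧
  ∃ q : ℕ → ℤ, (∀ i ≤ n, q i ∈ I ∧ p i ∈ B (q i)) ∧
    ∀ i ≤ n, ∀ j ≤ n, q i = q j → i = j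

/-- A `(B i : i ∈ I)`-rainbow copy of `H` in `G`: an induced copy of `H` with each
vertex in a different block. -/
def RainbowCopy (G : SimpleGraph V) (I : Finset ℤ) (B : ℤ → Set V)
    (H : SimpleGraph W) : Prop :=
  ∃ (f : H ↪g G) (q : W → ℤ), Function.Injective q ∧ ∀ w : W, q w ∈ I ∧ f w ∈ B (q w)

/-- `(N,K,σ,lam,c)` forces `H`. -/
def Forces (H : SimpleGraph W) (N K : ℕ) (σ lam c : ℝ) : Prop :=
  ∀ {V : Type} [Fintype V] (G : SimpleGraph V),
    Coherent G ((Fintype.card V : ℝ) ^ (1 - c)) ((Fintype.card V : ℝ) ^ (1 - c)) →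
    N ≤ Fintype.card V →
    ∀ (I : Finset ℤ) (A : ℤ → Set V), IsBlockade I A → I.card = K →
      ShrinkageLE I A σ → LinkageLE G I A lam →
      RainbowCopy G I A H

/-- `p 0 - ⋯ - p n` is a handle of length `n` that can be added to (the graph induced
on) `S` inside the ambient graph `H`: an induced path of `H[S ∪ p]` of length at least
two whose ends lie in `S`, whose internal vertices avoid `S` and have degree two in
`H[S ∪ p]`. -/
def IsHandle (H : SimpleGraph V) (S : Set V) (n : ℕ) (p : ℕ → V) : Prop :=
  2 ≤ n ∧
  (∀ i ≤ n, ∀ j ≤ n, p i = p j → i = j) ∧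
  p 0 ∈ S ∧ p n ∈ S ∧
  (∀ i, 0 < i → i < n → p i ∉ S) ∧
  (∀ i < n, H.Adj (p i) (p (i+1))) ∧
  (∀ i j, i + 1 < j → j ≤ n → ¬ H.Adj (p i) (p j)) ∧
  (∀ i, 0 < i → i < n → ∀ w, (w ∈ S ∨ ∃ j ≤ n, w = p j) → H.Adj (p i) w →
    w = p (i-1) ∨ w = p (i+1))

/-- The vertex sets `S` such that the induced subgraph `H[S]` can be built, starting
from the two-vertex graph with no edges, by repeatedly adding handles of length at
least `β`. -/
inductive BuildableOn (H : SimpleGraph V) (β : ℕ) : Set V → Prop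
  | base (u v : V) (huv : u ≠ v) (hadj : ¬ H.Adj u v) : BuildableOn H β {u, v}
  | handle (S : Set V) (n : ℕ) (p : ℕ → V) (hS : BuildableOn H β S)
      (hh : IsHandle H S n p) (hn : β ≤ n) :
      BuildableOn H β (S ∪ {w | ∃ j ≤ n, w = p j})

/-- `H` is `β`-buildable. -/
def Buildable [Fintype V] (H : SimpleGraph V) (β : ℕ) : Prop :=
  BuildableOn H β Set.univ

/-- The vertex sets `S` such that the induced subgraph `H[S]` can be built, starting
from the null graph, by repeatedly adding a subleaf or a handle of length at least
`β`. -/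
inductive WeaklyBuildableOn (H : SimpleGraph V) (β : ℕ) : Set V → Prop
  | empty : WeaklyBuildableOn H β ∅
  | subleaf (S : Set V) (v : V) (hv : v ∉ S) (hdeg : (S ∩ H.neighborSet v).ncard ≤ 1)
      (hS : WeaklyBuildableOn H β S) : WeaklyBuildableOn H β (insert v S)
  | handle (S : Set V) (n : ℕ) (p : ℕ → V) (hS : WeaklyBuildableOn H β S)
      (hh : IsHandle H S n p) (hn : β ≤ n) :
      WeaklyBuildableOn H β (S ∪ {w | ∃ j ≤ n, w = p j})

/-- `H` is weakly `β`-buildable. -/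
def WeaklyBuildable [Fintype V] (H : SimpleGraph V) (β : ℕ) : Prop :=
  WeaklyBuildableOn H β Set.univ

lemma count_fun {E : Type} [Fintype E] [DecidableEq E] (q : ℕ) (hq : 0 < q)
    (S : Finset E) (T : Finset (Fin q)) :
    ((Finset.univ.filter (fun f : E → Fin q => ∀ e ∈ S, f e ∈ T)).card : ℝ)
      = (q : ℝ) ^ (Fintype.card E) * ((T.card : ℝ) / q) ^ S.card := by
  have h : (Finset.univ.filter (fun f : E → Fin q => ∀ e ∈ S, f e ∈ T))
      = Fintype.piFinset (fun e => if e ∈ S then T else Finset.univ) := by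
    ext f
    simp only [Finset.mem_filter, Finset.mem_univ, true_and, Fintype.mem_piFinset]
    refine forall_congr' fun e => ?_
    by_cases he : e ∈ S <;> simp [he]
  have hq' : (q : ℝ) ≠ 0 := by positivity
  rw [h, Fintype.card_piFinset]
  push_cast
  have h2 : ∀ e : E, (((if e ∈ S then T else Finset.univ : Finset (Fin q)).card : ℕ) : ℝ)
      = q * (if e ∈ S then (T.card : ℝ) / q else 1) := by
    intro e
    by_cases he : e ∈ S
    · simp [he]; field_simp
    · simp [he]
  rw [Finset.prod_congr rfl (fun e _ => h2 e), Finset.prod_mul_distrib]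
  simp [div_pow]

lemma sum_count {E I : Type} [Fintype E] [DecidableEq E] (q : ℕ) (hq : 0 < q)
    (J : Finset I) (S : I → Finset E) (T : Finset (Fin q)) (m : ℕ)
    (hS : ∀ i ∈ J, (S i).card = m) :
    (∑ f : E → Fin q, ((J.filter (fun i => ∀ e ∈ S i, f e ∈ T)).card : ℝ))
      = (J.card : ℝ) * ((q : ℝ) ^ (Fintype.card E) * ((T.card : ℝ) / q) ^ m) := by
  have h := Finset.sum_card_bipartiteAbove_eq_sum_card_bipartiteBelow
    (s := (Finset.univ : Finset (E → Fin q))) (t := J) (fun f i => ∀ e ∈ S i, f e ∈ T)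
  have h' : (∑ f : E → Fin q, ((J.filter (fun i => ∀ e ∈ S i, f e ∈ T)).card : ℝ))
      = ∑ i ∈ J, ((Finset.univ.filter (fun f : E → Fin q => ∀ e ∈ S i, f e ∈ T)).card : ℝ) := by
    exact_mod_cast h
  rw [h', Finset.sum_congr rfl (fun i hi => by rw [count_fun q hq, hS i hi])]
  simp

/-- The graph of a colouring of the pairs: adjacent iff the pair has colour `0`. -/
def colGraph {N q : ℕ} [NeZero q] (f : Sym2 (Fin N) → Fin q) : SimpleGraph (Fin N) where
  Adj u v := u ≠ v ∧ f s(u, v) = 0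
  symm := ⟨fun u v h => ⟨h.1.symm, by rw [Sym2.eq_swap]; exact h.2⟩⟩
  loopless := ⟨fun u h => h.1 rfl⟩

open Classical in
lemma random_graph {U₁ U₂ : Type} [Fintype U₁] [Fintype U₂] (K₁ : SimpleGraph U₁)
    (K₂ : SimpleGraph U₂) (u₁ : U₁) (u₂ : U₂) (N q k : ℕ) (hq : 2 ≤ q)
    (hlt : (N : ℝ) ^ (Fintype.card U₁) * (1 / (q : ℝ)) ^ K₁.edgeFinset.card
      + (N : ℝ) ^ (Fintype.card U₂) * (1 / (q : ℝ)) ^ K₂.edgeFinset.card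
      + (N : ℝ) / 2 * (2 * ((N : ℝ) ^ (2 * k) * (1 - 1 / (q : ℝ)) ^ (k * k))) < (N : ℝ) / 2) :
    ∃ (G : SimpleGraph (Fin N)) (D : Finset (Fin N)), (D.card : ℝ) < N / 2 ∧
      (∀ φ : U₁ ↪ Fin N, (∀ a b, K₁.Adj a b → G.Adj (φ a) (φ b)) → φ u₁ ∈ D) ∧
      (∀ φ : U₂ ↪ Fin N, (∀ a b, K₂.Adj a b → G.Adj (φ a) (φ b)) → φ u₂ ∈ D) ∧
      (∀ A B : Finset (Fin N), PurePair G (A : Set (Fin N)) (B : Set (Fin N)) →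
        k ≤ A.card → k ≤ B.card → False) := by
  have : NeZero q := ⟨by omega⟩
  have hq0 : 0 < q := by omega
  have hqr : (0 : ℝ) < q := by positivity
  have hq2 : (2 : ℝ) ≤ q := by exact_mod_cast hq
  set T₀ : Finset (Fin q) := {0} with hT₀
  set T₁ : Finset (Fin q) := {0}ᶜ with hT₁
  have cT₀ : (T₀.card : ℝ) / q = 1 / q := by simp [hT₀]
  have cT₁ : (T₁.card : ℝ) / q = 1 - 1 / q := by
    rw [hT₁, Finset.card_compl]
    simp only [Fintype.card_fin, Finset.card_singleton]
    rw [Nat.cast_sub (by omega)]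
    field_simp
    simp
  -- index families
  let S₁ : (U₁ ↪ Fin N) → Finset (Sym2 (Fin N)) := fun φ => K₁.edgeFinset.image (Sym2.map φ)
  let S₂ : (U₂ ↪ Fin N) → Finset (Sym2 (Fin N)) := fun φ => K₂.edgeFinset.image (Sym2.map φ)
  let P : Finset (Finset (Fin N) × Finset (Fin N)) :=
    (Finset.powersetCard k Finset.univ ×ˢ Finset.powersetCard k Finset.univ).filter
      (fun p => Disjoint p.1 p.2)
  let S : Finset (Fin N) × Finset (Fin N) → Finset (Sym2 (Fin N)) :=
    fun p => (p.1 ×ˢ p.2).image (fun x => s(x.1, x.2))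
  have hS₁ : ∀ φ ∈ (Finset.univ : Finset (U₁ ↪ Fin N)), (S₁ φ).card = K₁.edgeFinset.card :=
    fun φ _ => Finset.card_image_of_injective _ (Sym2.map.injective φ.injective)
  have hS₂ : ∀ φ ∈ (Finset.univ : Finset (U₂ ↪ Fin N)), (S₂ φ).card = K₂.edgeFinset.card :=
    fun φ _ => Finset.card_image_of_injective _ (Sym2.map.injective φ.injective)
  have hS : ∀ p ∈ P, (S p).card = k * k := by
    rintro ⟨A, B⟩ hp
    simp only [P, Finset.mem_filter, Finset.mem_product, Finset.mem_powersetCard] at hp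
    obtain ⟨⟨⟨-, hA⟩, -, hB⟩, hd⟩ := hp
    simp only [S]
    rw [Finset.card_image_of_injOn, Finset.card_product, hA, hB]
    rintro ⟨a, b⟩ h ⟨a', b'⟩ h' heq
    simp only [Finset.coe_product, Set.mem_prod, Finset.mem_coe] at h h'
    simp only [Sym2.eq_iff] at heq
    rcases heq with ⟨rfl, rfl⟩ | ⟨rfl, rfl⟩
    · rfl
    · exact absurd h'.2 (Finset.disjoint_left.mp hd h.1)
  have e₁ := sum_count q hq0 Finset.univ S₁ T₀ _ hS₁
  have e₂ := sum_count q hq0 Finset.univ S₂ T₀ _ hS₂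
  have e₃ := sum_count q hq0 P S T₀ _ hS
  have e₄ := sum_count q hq0 P S T₁ _ hS
  rw [cT₀] at e₁ e₂ e₃
  rw [cT₁] at e₄
  set Q : ℝ := (q : ℝ) ^ (Fintype.card (Sym2 (Fin N))) with hQ
  have hQpos : 0 < Q := by positivity
  have c₁ : ((Finset.univ : Finset (U₁ ↪ Fin N)).card : ℝ) ≤ (N : ℝ) ^ (Fintype.card U₁) := by
    rw [Finset.card_univ, Fintype.card_embedding_eq]
    exact_mod_cast (by simpa using Nat.descFactorial_le_pow _ _)
  have c₂ : ((Finset.univ : Finset (U₂ ↪ Fin N)).card : ℝ) ≤ (N : ℝ) ^ (Fintype.card U₂) := by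
    rw [Finset.card_univ, Fintype.card_embedding_eq]
    exact_mod_cast (by simpa using Nat.descFactorial_le_pow _ _)
  have c₃ : (P.card : ℝ) ≤ (N : ℝ) ^ (2 * k) := by
    have : P.card ≤ N ^ (2 * k) := by
      refine (Finset.card_filter_le _ _).trans ?_
      rw [Finset.card_product, Finset.card_powersetCard, Finset.card_univ, Fintype.card_fin,
        two_mul, pow_add]
      exact Nat.mul_le_mul (Nat.choose_le_pow _ _) (Nat.choose_le_pow _ _)
    exact_mod_cast this
  have hpq : 1 / (q : ℝ) ≤ 1 - 1 / q := by
    have : 1 / (q : ℝ) ≤ 1 / 2 := one_div_le_one_div_of_le (by norm_num) hq2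
    linarith
  have hp0 : 0 ≤ 1 / (q : ℝ) := by positivity
  let F : (Sym2 (Fin N) → Fin q) → ℝ := fun f =>
    ((Finset.univ.filter (fun φ => ∀ e ∈ S₁ φ, f e ∈ T₀)).card : ℝ)
    + ((Finset.univ.filter (fun φ => ∀ e ∈ S₂ φ, f e ∈ T₀)).card : ℝ)
    + (N : ℝ) / 2 * (((P.filter (fun p => ∀ e ∈ S p, f e ∈ T₀)).card : ℝ)
      + ((P.filter (fun p => ∀ e ∈ S p, f e ∈ T₁)).card : ℝ))
  have hsum : ∑ f, F f < ∑ f : Sym2 (Fin N) → Fin q, (N : ℝ) / 2 := by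
    simp only [F]
    rw [Finset.sum_add_distrib, Finset.sum_add_distrib, ← Finset.mul_sum,
      Finset.sum_add_distrib, e₁, e₂, e₃, e₄]
    have hR : (∑ f : Sym2 (Fin N) → Fin q, (N : ℝ) / 2) = Q * (N / 2) := by
      simp [hQ]
    rw [hR]
    have hpp : (1 / (q : ℝ)) ^ (k * k) ≤ (1 - 1 / (q : ℝ)) ^ (k * k) := by gcongr
    have hpos : 0 ≤ (1 / (q : ℝ)) ^ (k * k) := by positivity
    have a₁ := mul_le_mul_of_nonneg_right c₁
      (show 0 ≤ Q * (1 / (q : ℝ)) ^ K₁.edgeFinset.card by positivity)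
    have a₂ := mul_le_mul_of_nonneg_right c₂
      (show 0 ≤ Q * (1 / (q : ℝ)) ^ K₂.edgeFinset.card by positivity)
    have a₃ : (P.card : ℝ) * (Q * (1 / (q : ℝ)) ^ (k * k))
        ≤ (N : ℝ) ^ (2 * k) * (Q * (1 - 1 / (q : ℝ)) ^ (k * k)) := by gcongr
    have a₄ : (P.card : ℝ) * (Q * (1 - 1 / (q : ℝ)) ^ (k * k))
        ≤ (N : ℝ) ^ (2 * k) * (Q * (1 - 1 / (q : ℝ)) ^ (k * k)) := by
      have := hpos.trans hpp
      gcongr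
    have a₅ := mul_le_mul_of_nonneg_left (add_le_add a₃ a₄)
      (show (0 : ℝ) ≤ (N : ℝ) / 2 by positivity)
    have a₆ := mul_lt_mul_of_pos_left hlt hQpos
    refine lt_of_le_of_lt (add_le_add (add_le_add a₁ a₂) a₅) (lt_of_eq_of_lt ?_ a₆)
    ring
  obtain ⟨f, -, hf⟩ := Finset.exists_lt_of_sum_lt hsum
  have key : ∀ {U : Type} [Fintype U] (K : SimpleGraph U) (φ : U ↪ Fin N),
      (∀ a b, K.Adj a b → (colGraph f).Adj (φ a) (φ b)) →
      ∀ e ∈ K.edgeFinset.image (Sym2.map φ), f e ∈ T₀ := by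
    intro U _ K φ h e he
    obtain ⟨e, he', rfl⟩ := Finset.mem_image.mp he
    clear he
    induction e using Sym2.ind with
    | _ a b =>
      rw [SimpleGraph.mem_edgeFinset, SimpleGraph.mem_edgeSet] at he'
      simpa [hT₀] using (h a b he').2
  set X₁ := Finset.univ.filter (fun φ => ∀ e ∈ S₁ φ, f e ∈ T₀) with hX₁
  set X₂ := Finset.univ.filter (fun φ => ∀ e ∈ S₂ φ, f e ∈ T₀) with hX₂
  set Y₀ := P.filter (fun p => ∀ e ∈ S p, f e ∈ T₀) with hY₀
  set Y₁ := P.filter (fun p => ∀ e ∈ S p, f e ∈ T₁) with hY₁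
  have hf' : (X₁.card : ℝ) + X₂.card + (N : ℝ) / 2 * (Y₀.card + Y₁.card) < N / 2 := hf
  have hX₁0 : (0 : ℝ) ≤ X₁.card := by positivity
  have hX₂0 : (0 : ℝ) ≤ X₂.card := by positivity
  have hYlt : Y₀.card + Y₁.card = 0 := by
    by_contra hne
    have : (1 : ℝ) ≤ (Y₀.card : ℝ) + Y₁.card := by exact_mod_cast Nat.one_le_iff_ne_zero.mpr hne
    have hN : (0 : ℝ) ≤ (N : ℝ) / 2 := by positivity
    nlinarith
  have hY₀e : Y₀ = ∅ := Finset.card_eq_zero.mp (by omega)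
  have hY₁e : Y₁ = ∅ := Finset.card_eq_zero.mp (by omega)
  refine ⟨colGraph f, X₁.image (fun φ => φ u₁) ∪ X₂.image (fun φ => φ u₂), ?_, ?_, ?_, ?_⟩
  · have h1 : ((X₁.image (fun φ => φ u₁) ∪ X₂.image (fun φ => φ u₂)).card : ℝ)
        ≤ X₁.card + X₂.card := by
      exact_mod_cast (Finset.card_union_le _ _).trans
        (add_le_add Finset.card_image_le Finset.card_image_le)
    have : (0 : ℝ) ≤ (N : ℝ) / 2 * (Y₀.card + Y₁.card) := by positivity
    linarith
  · intro φ h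
    exact Finset.mem_union_left _ (Finset.mem_image_of_mem _
      (Finset.mem_filter.mpr ⟨Finset.mem_univ _, key K₁ φ h⟩))
  · intro φ h
    exact Finset.mem_union_right _ (Finset.mem_image_of_mem _
      (Finset.mem_filter.mpr ⟨Finset.mem_univ _, key K₂ φ h⟩))
  · intro A B hp hA hB
    obtain ⟨A', hA', cA⟩ := Finset.exists_subset_card_eq hA
    obtain ⟨B', hB', cB⟩ := Finset.exists_subset_card_eq hB
    obtain ⟨hd, hp⟩ := hp
    have hd' : Disjoint A B := by exact_mod_cast hd
    have hne : ∀ a ∈ A, ∀ b ∈ B, a ≠ b := fun a ha b hb hab =>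
      Finset.disjoint_left.mp hd' ha (hab ▸ hb)
    have hP : (A', B') ∈ P := by
      simp only [P, Finset.mem_filter, Finset.mem_product, Finset.mem_powersetCard]
      exact ⟨⟨⟨Finset.subset_univ _, cA⟩, Finset.subset_univ _, cB⟩, hd'.mono hA' hB'⟩
    rcases hp with hp | hp
    · have : (A', B') ∈ Y₀ := by
        refine Finset.mem_filter.mpr ⟨hP, fun e he => ?_⟩
        obtain ⟨⟨a, b⟩, hab, rfl⟩ := Finset.mem_image.mp he
        rw [Finset.mem_product] at hab
        simpa [hT₀] using (hp a (hA' hab.1) b (hB' hab.2)).2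
      simp [hY₀e] at this
    · have : (A', B') ∈ Y₁ := by
        refine Finset.mem_filter.mpr ⟨hP, fun e he => ?_⟩
        obtain ⟨⟨a, b⟩, hab, rfl⟩ := Finset.mem_image.mp he
        rw [Finset.mem_product] at hab
        simp only [hT₁, Finset.mem_compl, Finset.mem_singleton]
        exact fun h0 => hp a (hA' hab.1) b (hB' hab.2) ⟨hne a (hA' hab.1) b (hB' hab.2), h0⟩
      simp [hY₁e] at this

open Filter in
lemma asym1 (v e : ℕ) (d : ℝ) (h : (v : ℝ) - 1 < (1 - d) * e) :
    ∀ᶠ N : ℕ in atTop,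
      (N : ℝ) ^ v * (1 / ((⌈(N : ℝ) ^ (1 - d)⌉₊ : ℕ) : ℝ)) ^ e < (N : ℝ) / 8 := by
  have hδ : 0 < (1 - d) * e - (v - 1) := by linarith
  have ht := (tendsto_rpow_neg_atTop hδ).comp tendsto_natCast_atTop_atTop (α := ℕ)
  filter_upwards [ht.eventually (gt_mem_nhds (show (0 : ℝ) < 1 / 8 by norm_num)),
    eventually_ge_atTop 1] with N h1 h2
  have hN : (0 : ℝ) < N := by exact_mod_cast h2
  simp only [Function.comp] at h1
  have hx : 0 < (N : ℝ) ^ (1 - d) := Real.rpow_pos_of_pos hN _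
  have h3 : 1 / ((⌈(N : ℝ) ^ (1 - d)⌉₊ : ℕ) : ℝ) ≤ 1 / (N : ℝ) ^ (1 - d) :=
    one_div_le_one_div_of_le hx (Nat.le_ceil _)
  calc (N : ℝ) ^ v * (1 / ((⌈(N : ℝ) ^ (1 - d)⌉₊ : ℕ) : ℝ)) ^ e
      ≤ (N : ℝ) ^ v * (1 / (N : ℝ) ^ (1 - d)) ^ e := by gcongr
    _ = (N : ℝ) * (N : ℝ) ^ (-((1 - d) * e - (v - 1))) := by
      rw [one_div, ← Real.rpow_neg hN.le, ← Real.rpow_natCast, ← Real.rpow_natCast,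
        ← Real.rpow_mul hN.le, ← Real.rpow_add hN]
      nth_rewrite 2 [← Real.rpow_one (N : ℝ)]
      rw [← Real.rpow_add hN]
      congr 1
      ring
    _ < (N : ℝ) * (1 / 8) := by gcongr
    _ = (N : ℝ) / 8 := by ring

open Filter in
lemma asym2 (c d ε : ℝ) (hcd : c < d) (hd : d < 1) (hε : 0 < ε) :
    ∀ᶠ N : ℕ in atTop,
      2 * ((N : ℝ) ^ (2 * ⌈ε * (N : ℝ) ^ (1 - c)⌉₊)
        * (1 - 1 / ((⌈(N : ℝ) ^ (1 - d)⌉₊ : ℕ) : ℝ))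
          ^ (⌈ε * (N : ℝ) ^ (1 - c)⌉₊ * ⌈ε * (N : ℝ) ^ (1 - c)⌉₊)) < 1 / 2 := by
  have hlog := ((isLittleO_log_rpow_atTop (sub_pos.mpr hcd)).bound
    (show 0 < ε / 8 by positivity))
  have hlog' := (tendsto_natCast_atTop_atTop (R := ℝ)).eventually hlog
  have hbig := (tendsto_natCast_atTop_atTop (R := ℝ)).eventually
    ((tendsto_rpow_atTop (sub_pos.mpr hcd)).eventually (eventually_ge_atTop (8 / ε)))
  filter_upwards [hlog', hbig, eventually_ge_atTop 1] with N h1 h2 h3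
  have hN : (0 : ℝ) < N := by exact_mod_cast h3
  have hN1 : (1 : ℝ) ≤ N := by exact_mod_cast h3
  have hx : 1 ≤ (N : ℝ) ^ (1 - d) := Real.one_le_rpow hN1 (by linarith)
  have hy : 0 < (N : ℝ) ^ (d - c) := Real.rpow_pos_of_pos hN _
  have hz : 0 < (N : ℝ) ^ (1 - c) := Real.rpow_pos_of_pos hN _
  have hprod : (N : ℝ) ^ (1 - c) = (N : ℝ) ^ (1 - d) * (N : ℝ) ^ (d - c) := by
    rw [← Real.rpow_add hN]; congr 1; ring
  set q : ℕ := ⌈(N : ℝ) ^ (1 - d)⌉₊ with hq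
  set k : ℕ := ⌈ε * (N : ℝ) ^ (1 - c)⌉₊ with hk
  have hq1 : (N : ℝ) ^ (1 - d) ≤ q := Nat.le_ceil _
  have hq2 : (q : ℝ) ≤ 2 * (N : ℝ) ^ (1 - d) := by
    have := Nat.ceil_lt_add_one (show 0 ≤ (N : ℝ) ^ (1 - d) by linarith)
    linarith
  have hk1 : ε * (N : ℝ) ^ (1 - c) ≤ k := Nat.le_ceil _
  have hk0 : (1 : ℝ) ≤ k := by
    have : 0 < k := Nat.ceil_pos.mpr (by positivity)
    exact_mod_cast this
  have hq0 : (0 : ℝ) < q := by linarith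
  have hlogN : Real.log N ≤ ε / 8 * (N : ℝ) ^ (d - c) := by
    rw [Real.norm_eq_abs, Real.norm_eq_abs, abs_of_pos hy] at h1
    exact (le_abs_self _).trans h1
  have h4 : 4 * (ε / 8) * (N : ℝ) ^ (d - c) ≤ (k : ℝ) / q := by
    rw [le_div_iff₀ hq0]
    refine le_trans ?_ hk1
    rw [hprod]
    have : 4 * (ε / 8) * (N : ℝ) ^ (d - c) * q
        ≤ 4 * (ε / 8) * (N : ℝ) ^ (d - c) * (2 * (N : ℝ) ^ (1 - d)) := by gcongr
    linarith
  have h5 : 2 ≤ 2 * (ε / 8) * (N : ℝ) ^ (d - c) := by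
    have := mul_le_mul_of_nonneg_left h2 (show 0 ≤ 2 * (ε / 8) by positivity)
    have h6 : 2 * (ε / 8) * (8 / ε) = 2 := by field_simp
    linarith
  have hexp : 2 * Real.log N - (k : ℝ) / q ≤ -2 := by linarith
  have hbase0 : 0 ≤ 1 - 1 / (q : ℝ) := by
    have : 1 / (q : ℝ) ≤ 1 := by
      rw [div_le_one hq0]; linarith
    linarith
  have hbase : 1 - 1 / (q : ℝ) ≤ Real.exp (-(1 / q)) := by
    have := Real.add_one_le_exp (-(1 / (q : ℝ)))
    linarith
  have hmain : (N : ℝ) ^ (2 * k) * (1 - 1 / (q : ℝ)) ^ (k * k) ≤ Real.exp (-2) := by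
    calc (N : ℝ) ^ (2 * k) * (1 - 1 / (q : ℝ)) ^ (k * k)
        ≤ (Real.exp (Real.log N)) ^ (2 * k) * (Real.exp (-(1 / q))) ^ (k * k) := by
          rw [Real.exp_log hN]; gcongr
      _ = Real.exp (k * (2 * Real.log N - (k : ℝ) / q)) := by
          rw [← Real.exp_nat_mul, ← Real.exp_nat_mul, ← Real.exp_add]
          congr 1
          push_cast
          ring
      _ ≤ Real.exp (-2) := by
          apply Real.exp_le_exp.mpr
          nlinarith
  have he : Real.exp (-2) < 1 / 4 := by
    rw [Real.exp_neg, inv_eq_one_div]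
    apply one_div_lt_one_div_of_lt (by norm_num)
    have h1 : (2 : ℝ) < Real.exp 1 := by linarith [Real.exp_one_gt_d9]
    have : Real.exp 2 = Real.exp 1 * Real.exp 1 := by rw [← Real.exp_add]; norm_num
    nlinarith
  linarith

open Classical in
lemma exists_dense_subgraph {W : Type} [Fintype W] (c : ℝ) (hc : 0 < c) (H : SimpleGraph W)
    (h : c < congestion H) :
    ∃ (U : Type) (_ : Fintype U) (K : SimpleGraph U) (ι : U ↪ W) (a b : U), K.Adj a b ∧
      (∀ x y, K.Adj x y → H.Adj (ι x) (ι y)) ∧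
      ((Fintype.card U : ℝ) - 1 < (1 - c) * K.edgeFinset.card) := by
  obtain ⟨x, hx, hcx⟩ := exists_lt_of_lt_csSup (Set.Nonempty.inl (Set.singleton_nonempty 0)) h
  rcases hx with hx | ⟨J, hJ, hx⟩
  · rw [Set.mem_singleton_iff] at hx
    linarith
  refine ⟨J.verts, inferInstance, J.coe, Function.Embedding.subtype _, ?_⟩
  have hcard : J.coe.edgeFinset.card = J.edgeSet.ncard := by
    rw [← J.image_coe_edgeSet_coe, Set.ncard_image_of_injective _
      (Sym2.map.injective Subtype.val_injective), ← SimpleGraph.coe_edgeFinset,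
      Set.ncard_coe_finset]
  have hv : J.verts.ncard = Fintype.card J.verts := by
    rw [← Nat.card_coe_set_eq, Nat.card_eq_fintype_card]
  have hpos : (0 : ℝ) < J.edgeSet.ncard := by
    exact_mod_cast (Set.ncard_pos (Set.toFinite _)).mpr hJ
  obtain ⟨e, he⟩ := hJ
  induction e using Sym2.ind with
  | _ a b =>
    rw [SimpleGraph.Subgraph.mem_edgeSet] at he
    refine ⟨⟨a, he.fst_mem⟩, ⟨b, he.snd_mem⟩, he, fun x y hxy => J.adj_sub hxy, ?_⟩
    have : ((J.verts.ncard : ℝ) - 1) / J.edgeSet.ncard < 1 - c := by linarith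
    rw [div_lt_iff₀ hpos, ← hcard, hv] at this
    refine lt_of_lt_of_eq this ?_
    congr!

/-- if both `H` and `Hᶜ` have congestion more than `c`, then for every
`ε > 0` there is a graph `G` with `|G| > 1` that is `H`-free and `Hᶜ`-free and has no
pure pair `A, B` with `|A|, |B| ≥ ε|G|^{1-c}`. -/
theorem statement_1 (c : ℝ) (hc : 0 < c) {W : Type} [Fintype W] (H : SimpleGraph W)
    (h1 : c < congestion H) (h2 : c < congestion Hᶜ) (ε : ℝ) (hε : 0 < ε) :
    ∃ (n : ℕ) (G : SimpleGraph (Fin n)), 1 < n ∧ ¬ Contains G H ∧ ¬ Contains G Hᶜ ∧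
      ¬ ∃ A B : Set (Fin n), PurePair G A B ∧
          ε * (n : ℝ) ^ (1 - c) ≤ (A.ncard : ℝ) ∧
          ε * (n : ℝ) ^ (1 - c) ≤ (B.ncard : ℝ) := by
  classical
  obtain ⟨U₁, _, K₁, ι₁, a₁, b₁, hab₁, hι₁, hd₁⟩ := exists_dense_subgraph c hc H h1
  obtain ⟨U₂, _, K₂, ι₂, a₂, b₂, hab₂, hι₂, hd₂⟩ := exists_dense_subgraph c hc Hᶜ h2
  have hc1 : c < 1 := by
    have : 1 < Fintype.card U₁ := Fintype.one_lt_card_iff.mpr ⟨a₁, b₁, hab₁.ne⟩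
    have h : (1 : ℝ) < Fintype.card U₁ := by exact_mod_cast this
    have h0 : (0 : ℝ) ≤ K₁.edgeFinset.card := by positivity
    by_contra hcon
    nlinarith
  obtain ⟨d, hcd, hdd1, hdd₁, hdd₂⟩ : ∃ d : ℝ, c < d ∧ d < 1 ∧
      (Fintype.card U₁ : ℝ) - 1 < (1 - d) * K₁.edgeFinset.card ∧
      (Fintype.card U₂ : ℝ) - 1 < (1 - d) * K₂.edgeFinset.card := by
    have hcont : ∀ m : ℝ, Continuous (fun d : ℝ => (1 - d) * m) := fun m => by fun_prop
    have t₁ := (hcont K₁.edgeFinset.card).continuousAt.eventually (lt_mem_nhds hd₁)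
    have t₂ := (hcont K₂.edgeFinset.card).continuousAt.eventually (lt_mem_nhds hd₂)
    have t₃ := gt_mem_nhds hc1
    have t := ((t₁.and (t₂.and t₃)).filter_mono nhdsWithin_le_nhds).and
      (self_mem_nhdsWithin (s := Set.Ioi c) (a := c))
    obtain ⟨d, ⟨x1, x2, x3⟩, x4⟩ := t.exists
    exact ⟨d, x4, x3, x1, x2⟩
  have hq2 := (tendsto_natCast_atTop_atTop (R := ℝ)).eventually
    ((tendsto_rpow_atTop (sub_pos.mpr hdd1)).eventually (Filter.eventually_ge_atTop 2))
  obtain ⟨N, hN4, hN1, hN2, hN3, hq2⟩ := ((Filter.eventually_ge_atTop 4).and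
    ((asym1 _ _ d hdd₁).and ((asym1 _ _ d hdd₂).and
      ((asym2 c d (ε / 2) hcd hdd1 (by positivity)).and hq2)))).exists
  have hNr : (4 : ℝ) ≤ N := by exact_mod_cast hN4
  have hq2' : 2 ≤ ⌈(N : ℝ) ^ (1 - d)⌉₊ := by
    have := hq2.trans (Nat.le_ceil _)
    exact_mod_cast this
  obtain ⟨G, D, hD, hφ₁, hφ₂, hpure⟩ := random_graph K₁ K₂ a₁ a₂ N ⌈(N : ℝ) ^ (1 - d)⌉₊
    ⌈ε / 2 * (N : ℝ) ^ (1 - c)⌉₊ hq2' (by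
      have := mul_lt_mul_of_pos_left hN3 (show (0 : ℝ) < N / 2 by linarith)
      linarith)
  have hcardS : (Dᶜ.card : ℝ) = N - D.card := by
    rw [Finset.card_compl, Fintype.card_fin, Nat.cast_sub]
    simpa using Finset.card_le_univ D
  have hS : (N : ℝ) / 2 < Dᶜ.card := by rw [hcardS]; linarith
  let θ : Fin Dᶜ.card ↪ Fin N := (Dᶜ.equivFin.symm.toEmbedding).trans (Function.Embedding.subtype _)
  have hθ : ∀ i, θ i ∉ D := fun i => Finset.mem_compl.mp (Dᶜ.equivFin.symm i).2
  refine ⟨Dᶜ.card, G.comap θ, ?_, ?_, ?_, ?_⟩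
  · have : (1 : ℝ) < Dᶜ.card := by linarith
    exact_mod_cast this
  · rintro ⟨g⟩
    exact hθ _ (hφ₁ ((ι₁.trans g.toEmbedding).trans θ)
      (fun a b hab => (g.map_rel_iff.mpr (hι₁ a b hab) : _)))
  · rintro ⟨g⟩
    exact hθ _ (hφ₂ ((ι₂.trans g.toEmbedding).trans θ)
      (fun a b hab => (g.map_rel_iff.mpr (hι₂ a b hab) : _)))
  · rintro ⟨A, B, ⟨hdisj, hp⟩, hA, hB⟩
    have hthr : ε / 2 * (N : ℝ) ^ (1 - c) ≤ ε * (Dᶜ.card : ℝ) ^ (1 - c) := by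
      have x1 : ((N : ℝ) / 2) ^ (1 - c) ≤ (Dᶜ.card : ℝ) ^ (1 - c) :=
        Real.rpow_le_rpow (by linarith) hS.le (by linarith)
      have x2 : ((N : ℝ) / 2) ^ (1 - c) = (N : ℝ) ^ (1 - c) / 2 ^ (1 - c) :=
        Real.div_rpow (by linarith) (by norm_num) _
      have x3 : (2 : ℝ) ^ (1 - c) ≤ 2 := by
        calc (2 : ℝ) ^ (1 - c) ≤ 2 ^ (1 : ℝ) :=
              Real.rpow_le_rpow_of_exponent_le (by norm_num) (by linarith)
          _ = 2 := Real.rpow_one 2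
      have x4 : (N : ℝ) ^ (1 - c) / 2 ≤ (N : ℝ) ^ (1 - c) / 2 ^ (1 - c) := by gcongr
      have x5 := mul_le_mul_of_nonneg_left ((x4.trans x2.ge).trans x1) hε.le
      linarith
    have hcard : ∀ X : Set (Fin Dᶜ.card), ε * (Dᶜ.card : ℝ) ^ (1 - c) ≤ (X.ncard : ℝ) →
        ⌈ε / 2 * (N : ℝ) ^ (1 - c)⌉₊ ≤ (X.toFinset.map θ).card := by
      intro X hX
      rw [Finset.card_map, ← Set.ncard_eq_toFinset_card']
      exact Nat.ceil_le.mpr (hthr.trans hX)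
    refine hpure (A.toFinset.map θ) (B.toFinset.map θ) ⟨?_, ?_⟩ (hcard A hA) (hcard B hB)
    · simp only [Finset.coe_map, Set.coe_toFinset]
      exact (Set.disjoint_image_iff θ.injective).mpr hdisj
    · simp only [Finset.coe_map, Set.coe_toFinset, Set.forall_mem_image]
      exact hp

end PurePairs
end
end

section
/- Let k≥1 and ρ≥2 be integers, let K = kρ⁴, and let γ,λ>0 with λ ≤ 1/(512ρ²K) and γ ≤ 3/(256K). Let G be a graph, let δ>0 with δ ≤ 3ρ/(128K²) and (256Kδ/3)^{ρ-1}|G| ≤ 1, and let A=(A_i : i∈I) be a blockade in G of length K, with linkage at most λ, that is not (γ,δ)-divergent. Then there is an A-rainbow bi-levelling (L, M, C) with length k and height at most 3ρ−3, such that the A-size of C is at least 1/(64ρ³K). -/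
noncomputable section

namespace PurePairs

open SimpleGraph

variable {V W : Type*}

/-! ### Auxiliary lemmas -/

lemma nbhd_mono (G : SimpleGraph V) {X Y : Set V} (h : X ⊆ Y) : nbhd G X ⊆ nbhd G Y := by
  rintro v ⟨x, hx, hv⟩
  exact ⟨x, h hx, hv⟩

lemma nbhd_union (G : SimpleGraph V) (X Y : Set V) :
    nbhd G (X ∪ Y) = nbhd G X ∪ nbhd G Y := by
  ext v
  constructor
  · rintro ⟨x, hx | hx, hv⟩
    · exact Or.inl ⟨x, hx, hv⟩
    · exact Or.inr ⟨x, hx, hv⟩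
  · rintro (⟨x, hx, hv⟩ | ⟨x, hx, hv⟩)
    · exact ⟨x, Or.inl hx, hv⟩
    · exact ⟨x, Or.inr hx, hv⟩

lemma nbhd_empty (G : SimpleGraph V) : nbhd G (∅ : Set V) = ∅ := by
  ext v
  simp [nbhd]

lemma ncard_le_real [Finite V] {X Y : Set V} (h : X ⊆ Y) : (X.ncard : ℝ) ≤ (Y.ncard : ℝ) := by
  exact_mod_cast Set.ncard_le_ncard h (Set.toFinite _)

lemma ncard_union_real [Finite V] (X Y : Set V) :
    ((X ∪ Y).ncard : ℝ) ≤ (X.ncard : ℝ) + (Y.ncard : ℝ) := by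
  exact_mod_cast Set.ncard_union_le X Y

lemma ncard_split_real [Finite V] (X Y : Set V) :
    (X.ncard : ℝ) = ((Y ∩ X).ncard : ℝ) + ((X \ Y).ncard : ℝ) := by
  have := Set.ncard_inter_add_ncard_sdiff_eq_ncard X Y (Set.toFinite _)
  rw [Set.inter_comm]
  exact_mod_cast this.symm

/-- Minimal subsets of a set with a given property. -/
lemma exists_min_subset [Finite V] (P : Set V → Prop) (S : Set V) (hS : P S) :
    ∃ T ⊆ S, P T ∧ ∀ v ∈ T, ¬ P (T \ {v}) := by
  induction hn : S.ncard using Nat.strong_induction_on generalizing S with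
  | _ n ih =>
    by_cases h : ∀ v ∈ S, ¬ P (S \ {v})
    · exact ⟨S, subset_rfl, hS, h⟩
    · push Not at h
      obtain ⟨v, hv, hP⟩ := h
      have hlt : (S \ {v}).ncard < n := by
        rw [← hn]
        exact Set.ncard_sdiff_singleton_lt_of_mem hv (Set.toFinite _)
      obtain ⟨T, hT, h1, h2⟩ := ih _ hlt _ hP rfl
      exact ⟨T, hT.trans Set.sdiff_subset, h1, h2⟩

lemma prune [Finite V] (G : SimpleGraph V) (F : Finset ℤ) (a : ℤ → ℝ) (ha : ∀ i ∈ F, 0 ≤ a i)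
    (D : ℤ → Set V) (S : Set V) (p lam : ℝ) (hp : 0 ≤ p) (hl : 0 ≤ lam)
    (hdeg : ∀ v ∈ S, ∀ i ∈ F, ((nbhd G {v} ∩ D i).ncard : ℝ) ≤ lam * a i)
    (hex : ∃ j ∈ F, p * a j ≤ ((nbhd G S ∩ D j).ncard : ℝ)) :
    ∃ T ⊆ S, (∃ j ∈ F, p * a j ≤ ((nbhd G T ∩ D j).ncard : ℝ)) ∧
      ∀ i ∈ F, ((nbhd G T ∩ D i).ncard : ℝ) ≤ (p + lam) * a i := by
  obtain ⟨T, hTS, hP, hmin⟩ := exists_min_subset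
    (fun T => ∃ j ∈ F, p * a j ≤ ((nbhd G T ∩ D j).ncard : ℝ)) S hex
  refine ⟨T, hTS, hP, fun i hi => ?_⟩
  rcases T.eq_empty_or_nonempty with rfl | ⟨v, hv⟩
  · rw [nbhd_empty]
    simp only [Set.empty_inter, Set.ncard_empty, Nat.cast_zero]
    have := ha i hi
    positivity
  · have h1 := hmin v hv
    push Not at h1
    have h2 := h1 i hi
    have h3 := hdeg v (hTS hv) i hi
    have h4 : nbhd G T ∩ D i ⊆ (nbhd G (T \ {v}) ∩ D i) ∪ (nbhd G {v} ∩ D i) := by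
      rw [← Set.union_inter_distrib_right, ← nbhd_union]
      refine Set.inter_subset_inter_left _ (nbhd_mono G ?_)
      simp
    have h5 := (ncard_le_real h4).trans (ncard_union_real _ _)
    linarith

lemma grade [Finite V] (G : SimpleGraph V) (a : ℤ → ℝ) (S : Set V) (p lam : ℝ)
    (hp : 0 ≤ p) (hl : 0 ≤ lam) (n : ℕ) :
    ∀ (F : Finset ℤ) (D : ℤ → Set V), n ≤ F.card → (∀ i ∈ F, 0 ≤ a i) →
    (∀ v ∈ S, ∀ i ∈ F, ((nbhd G {v} ∩ D i).ncard : ℝ) ≤ lam * a i) →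
    (∀ i ∈ F, n * (p + lam) * a i ≤ ((nbhd G S ∩ D i).ncard : ℝ)) →
    ∃ (Y : ℕ → Set V) (c : ℕ → ℤ) (C : ℕ → Set V) (T : Set V), T ⊆ S ∧
      (∀ s < n, Y s ⊆ T) ∧ (∀ s s', s ≤ s' → s' < n → Y s ⊆ Y s') ∧
      (∀ s < n, c s ∈ F) ∧ (∀ s < n, ∀ s' < n, c s = c s' → s = s') ∧
      (∀ s < n, C s ⊆ D (c s)) ∧ (∀ s < n, C s ⊆ nbhd G (Y s)) ∧
      (∀ s < n, ∀ s' < s, Disjoint (C s) (nbhd G (Y s'))) ∧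
      (∀ s < n, p * a (c s) ≤ ((C s).ncard : ℝ)) ∧
      (∀ i ∈ F, (∀ s < n, i ≠ c s) →
        ((nbhd G T ∩ D i).ncard : ℝ) ≤ n * (p + lam) * a i) := by
  induction n with
  | zero =>
    intro F D _ _ _ _
    refine ⟨fun _ => ∅, fun _ => 0, fun _ => ∅, ∅, Set.empty_subset _, ?_⟩
    simp [nbhd_empty]
  | succ n ih =>
    intro F D hn ha hdeg hcov
    have hFne : F.Nonempty := by
      rw [← Finset.card_pos]; omega
    obtain ⟨i0, hi0⟩ := hFne
    obtain ⟨U, hUS, ⟨j, hj, hjc⟩, hU⟩ := prune G F a ha D S p lam hp hl hdeg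
      ⟨i0, hi0, by
        refine le_trans ?_ (hcov i0 hi0)
        have := ha i0 hi0
        refine mul_le_mul_of_nonneg_right ?_ this
        push_cast
        nlinarith [mul_nonneg (Nat.cast_nonneg (α := ℝ) n) (add_nonneg hp hl)]⟩
    obtain ⟨Y, c, C, T, hTS, h1, h2, h3, h4, h5, h6, h7, h8, h9⟩ :=
      ih (F.erase j) (fun i => D i \ nbhd G U)
        (by rw [Finset.card_erase_of_mem hj]; omega)
        (fun i hi => ha i (Finset.mem_of_mem_erase hi))
        (fun v hv i hi => le_trans (ncard_le_real
          (Set.inter_subset_inter_right _ Set.sdiff_subset))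
          (hdeg v hv i (Finset.mem_of_mem_erase hi)))
        (fun i hi => by
          have hi' := Finset.mem_of_mem_erase hi
          have e1 := hcov i hi'
          have e2 := hU i hi'
          have e3 : nbhd G S ∩ D i ⊆ (nbhd G S ∩ (D i \ nbhd G U)) ∪ (nbhd G U ∩ D i) := by
            intro x hx
            by_cases hxU : x ∈ nbhd G U
            · exact Or.inr ⟨hxU, hx.2⟩
            · exact Or.inl ⟨hx.1, hx.2, hxU⟩
          have e4 := (ncard_le_real e3).trans (ncard_union_real _ _)
          push_cast at e1
          linarith)
    have hcj : ∀ s < n, c s ≠ j := fun s hs => Finset.ne_of_mem_erase (h3 s hs)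
    refine ⟨fun s => Nat.casesOn s U (fun s => U ∪ Y s), fun s => Nat.casesOn s j c,
      fun s => Nat.casesOn s (nbhd G U ∩ D j) C, U ∪ T, Set.union_subset hUS hTS,
      ?_, ?_, ?_, ?_, ?_, ?_, ?_, ?_, ?_⟩
    · intro s hs
      cases s with
      | zero => exact Set.subset_union_left
      | succ s => exact Set.union_subset_union_right _ (h1 s (by omega))
    · intro s s' hss hs'
      cases s with
      | zero =>
        cases s' with
        | zero => exact subset_rfl
        | succ s' => exact Set.subset_union_left
      | succ s =>
        cases s' with
        | zero => omega
        | succ s' => exact Set.union_subset_union_right _ (h2 s s' (by omega) (by omega))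
    · intro s hs
      cases s with
      | zero => exact hj
      | succ s => exact Finset.mem_of_mem_erase (h3 s (by omega))
    · intro s hs s' hs' hcc
      cases s with
      | zero =>
        cases s' with
        | zero => rfl
        | succ s' => exact absurd hcc.symm (hcj s' (by omega))
      | succ s =>
        cases s' with
        | zero => exact absurd hcc (hcj s (by omega))
        | succ s' => rw [h4 s (by omega) s' (by omega) hcc]
    · intro s hs
      cases s with
      | zero => exact Set.inter_subset_right
      | succ s => exact (h5 s (by omega)).trans Set.sdiff_subset
    · intro s hs
      cases s with
      | zero => exact Set.inter_subset_left
      | succ s => exact (h6 s (by omega)).trans (nbhd_mono G Set.subset_union_right)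
    · intro s hs s' hs'
      cases s with
      | zero => omega
      | succ s =>
        have hd : Disjoint (C s) (nbhd G U) :=
          Set.disjoint_of_subset_left (h5 s (by omega)) Set.disjoint_sdiff_left
        cases s' with
        | zero => exact hd
        | succ s' =>
          change Disjoint (C s) (nbhd G (U ∪ Y s'))
          rw [nbhd_union, Set.disjoint_union_right]
          exact ⟨hd, h7 s (by omega) s' (by omega)⟩
    · intro s hs
      cases s with
      | zero => exact hjc
      | succ s => exact h8 s (by omega)
    · intro i hi hne
      have hij : i ≠ j := hne 0 (by omega)
      have e1 := h9 i (Finset.mem_erase.2 ⟨hij, hi⟩) (fun s hs => hne (s + 1) (by omega))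
      have e2 := hU i hi
      have e3 : nbhd G (U ∪ T) ∩ D i ⊆ (nbhd G T ∩ (D i \ nbhd G U)) ∪ (nbhd G U ∩ D i) := by
        intro x hx
        by_cases hxU : x ∈ nbhd G U
        · exact Or.inr ⟨hxU, hx.2⟩
        · rw [nbhd_union] at hx
          rcases hx.1 with h | h
          · exact absurd h hxU
          · exact Or.inl ⟨h, hx.2, hxU⟩
      have e4 := (ncard_le_real e3).trans (ncard_union_real _ _)
      push_cast
      linarith

/-- Expansion, normalised by weights `a`. -/
def Exp (G : SimpleGraph V) (F : Finset ℤ) (a : ℤ → ℝ) (B : ℤ → Set V) (τ θ : ℝ) : Prop :=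
  ∀ i ∈ F, ∀ j ∈ F, i ≠ j → ∀ X ⊆ B i,
    min (τ * ((X.ncard : ℝ) / a i)) θ * a j ≤ ((nbhd G X ∩ B j).ncard : ℝ)

lemma exists_max_nat {α : Type*} (P : α → Prop) (μ : α → ℕ) (b : ℕ) (hb : ∀ x, P x → μ x ≤ b)
    (hne : ∃ x, P x) : ∃ x, P x ∧ ∀ y, P y → μ y ≤ μ x := by
  obtain ⟨x, hx, hmin⟩ := (measure (fun x => b - μ x)).wf.has_min {x | P x} hne
  refine ⟨x, hx, fun y hy => ?_⟩
  have h1 : ¬ (b - μ y < b - μ x) := hmin y hy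
  have h2 := hb x hx
  have h3 := hb y hy
  omega

lemma clean [Finite V] (G : SimpleGraph V) (F : Finset ℤ) (a : ℤ → ℝ) (ha : ∀ i ∈ F, 0 < a i)
    (A B' : ℤ → Set V) (γ δ τ θ β : ℝ) (hδ : 0 ≤ δ) (hτ : 0 ≤ τ)
    (hnd : ∀ i ∈ F, ∀ j ∈ F, i ≠ j → ∀ X ⊆ A i, ∀ Y ⊆ A j, δ * a i ≤ (X.ncard : ℝ) →
      Disjoint Y (nbhd G X) → (Y.ncard : ℝ) < γ * a j)
    (hB : ∀ i ∈ F, B' i ⊆ A i) (hsize : ∀ i ∈ F, β * a i ≤ ((B' i).ncard : ℝ))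
    (h1 : θ ≤ β - F.card * δ - γ) (h2 : 2 * δ * τ ≤ β - F.card * δ - γ) :
    ∃ B : ℤ → Set V, (∀ i, B i ⊆ B' i) ∧
      (∀ i ∈ F, (β - F.card * δ) * a i ≤ ((B i).ncard : ℝ)) ∧ Exp G F a B τ θ := by
  classical
  let BZ : (ℤ → ℤ → Set V) → ℤ → Set V := fun Z i => B' i \ ⋃ j ∈ F, Z i j
  let P : (ℤ → ℤ → Set V) → Prop := fun Z => ∀ i ∈ F, ∀ j ∈ F,
    Z i j ⊆ B' i ∧ ((Z i j).ncard : ℝ) ≤ δ * a i ∧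
    (i ≠ j → ((nbhd G (Z i j) ∩ BZ Z j).ncard : ℝ) ≤ τ * (((Z i j).ncard : ℝ) / a i) * a j)
  let μ : (ℤ → ℤ → Set V) → ℕ := fun Z => ∑ i ∈ F, ∑ j ∈ F, (Z i j).ncard
  obtain ⟨Z, hZ, hmax⟩ := exists_max_nat P μ (∑ i ∈ F, ∑ j ∈ F, Nat.card V)
    (fun Z _ => Finset.sum_le_sum fun i _ => Finset.sum_le_sum fun j _ => by
      rw [← Set.ncard_univ]
      exact Set.ncard_le_ncard (Set.subset_univ _) (Set.toFinite _))
    ⟨fun _ _ => ∅, fun i hi j hj => by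
      have := ha i hi
      refine ⟨Set.empty_subset _, ?_, fun _ => ?_⟩
      · simp only [Set.ncard_empty, Nat.cast_zero]; positivity
      · simp [nbhd_empty]⟩
  have hBsz : ∀ i ∈ F, (β - F.card * δ) * a i ≤ ((BZ Z i).ncard : ℝ) := by
    intro i hi
    have e1 := ncard_split_real (B' i) (⋃ j ∈ F, Z i j)
    have e2 : (((⋃ j ∈ F, Z i j) ∩ B' i).ncard : ℝ) ≤ F.card * (δ * a i) := by
      refine (ncard_le_real Set.inter_subset_left).trans ?_
      have : ((⋃ j ∈ F, Z i j).ncard) ≤ ∑ j ∈ F, (Z i j).ncard := by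
        exact Finset.set_ncard_biUnion_le F (Z i)
      calc ((⋃ j ∈ F, Z i j).ncard : ℝ) ≤ ((∑ j ∈ F, (Z i j).ncard : ℕ) : ℝ) := by
            exact_mod_cast this
        _ = ∑ j ∈ F, ((Z i j).ncard : ℝ) := by push_cast; rfl
        _ ≤ ∑ j ∈ F, δ * a i := Finset.sum_le_sum fun j hj => (hZ i hi j hj).2.1
        _ = _ := by rw [Finset.sum_const, nsmul_eq_mul]
    have e3 := hsize i hi
    change _ ≤ ((B' i \ ⋃ j ∈ F, Z i j).ncard : ℝ)
    nlinarith
  have hbig : ∀ i ∈ F, ∀ j ∈ F, i ≠ j → ∀ X ⊆ A i, δ * a i ≤ (X.ncard : ℝ) →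
      (β - F.card * δ - γ) * a j < ((nbhd G X ∩ BZ Z j).ncard : ℝ) := by
    intro i hi j hj hij X hX hXs
    have e1 := hnd i hi j hj hij X hX (BZ Z j \ nbhd G X)
      ((Set.sdiff_subset.trans Set.sdiff_subset).trans (hB j hj)) hXs Set.disjoint_sdiff_left
    have e2 := ncard_split_real (BZ Z j) (nbhd G X)
    have e3 := hBsz j hj
    nlinarith
  refine ⟨BZ Z, fun i => Set.sdiff_subset, hBsz, ?_⟩
  intro i hi j hj hij X hX
  by_contra hcon
  push Not at hcon
  have hai := ha i hi
  have haj := ha j hj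
  have hXB : X ⊆ B' i := hX.trans Set.sdiff_subset
  have hXd : Disjoint (Z i j) X := by
    rw [Set.disjoint_left]
    intro x hx hxX
    exact (hX hxX).2 (Set.mem_biUnion hj hx)
  have hXne : X.Nonempty := by
    rw [Set.nonempty_iff_ne_empty]
    rintro rfl
    simp only [nbhd_empty, Set.empty_inter, Set.ncard_empty, Nat.cast_zero, zero_div,
      mul_zero] at hcon
    have : min 0 θ ≤ 0 := min_le_left _ _
    nlinarith
  have hc1 : ((nbhd G X ∩ BZ Z j).ncard : ℝ) < τ * ((X.ncard : ℝ) / a i) * a j :=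
    hcon.trans_le (mul_le_mul_of_nonneg_right (min_le_left _ _) haj.le)
  have hc2 : ((nbhd G X ∩ BZ Z j).ncard : ℝ) < θ * a j :=
    hcon.trans_le (mul_le_mul_of_nonneg_right (min_le_right _ _) haj.le)
  have hXs : (X.ncard : ℝ) < δ * a i := by
    by_contra h
    push Not at h
    have := hbig i hi j hj hij X (hXB.trans (hB i hi)) h
    nlinarith
  have hcard : ((Z i j ∪ X).ncard : ℝ) = ((Z i j).ncard : ℝ) + (X.ncard : ℝ) := by
    exact_mod_cast Set.ncard_union_eq hXd (Set.toFinite _) (Set.toFinite _)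
  have hcov : ((nbhd G (Z i j ∪ X) ∩ BZ Z j).ncard : ℝ)
      ≤ τ * (((Z i j ∪ X).ncard : ℝ) / a i) * a j := by
    rw [nbhd_union, Set.union_inter_distrib_right]
    have e1 := ncard_union_real (nbhd G (Z i j) ∩ BZ Z j) (nbhd G X ∩ BZ Z j)
    have e2 := (hZ i hi j hj).2.2 hij
    rw [hcard, add_div]
    nlinarith
  have hsub : Z i j ∪ X ⊆ B' i := Set.union_subset (hZ i hi j hj).1 hXB
  have hle : ((Z i j ∪ X).ncard : ℝ) ≤ δ * a i := by
    by_contra h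
    push Not at h
    have e1 := hbig i hi j hj hij _ (hsub.trans (hB i hi)) h.le
    have e2 := (hZ i hi j hj).2.1
    have e3 : ((Z i j ∪ X).ncard : ℝ) / a i ≤ 2 * δ := by
      rw [div_le_iff₀ hai]; linarith
    have e4 : τ * (((Z i j ∪ X).ncard : ℝ) / a i) ≤ τ * (2 * δ) :=
      mul_le_mul_of_nonneg_left e3 hτ
    nlinarith
  let Z' : ℤ → ℤ → Set V := fun i' j' => if i' = i ∧ j' = j then Z i j ∪ X else Z i' j'
  have hZZ' : ∀ i' j', Z i' j' ⊆ Z' i' j' := by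
    intro i' j'
    by_cases h : i' = i ∧ j' = j
    · obtain ⟨rfl, rfl⟩ := h
      simp [Z']
    · simp [Z', h]
  have hBB : ∀ i', BZ Z' i' ⊆ BZ Z i' := fun i' =>
    Set.sdiff_subset_sdiff_right (Set.iUnion₂_mono fun j' _ => hZZ' i' j')
  have hP : P Z' := by
    intro i' hi' j' hj'
    by_cases h : i' = i ∧ j' = j
    · obtain ⟨rfl, rfl⟩ := h
      have : Z' i' j' = Z i' j' ∪ X := by simp [Z']
      rw [this]
      exact ⟨hsub, hle, fun _ => (ncard_le_real
        (Set.inter_subset_inter_right _ (hBB _))).trans hcov⟩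
    · have : Z' i' j' = Z i' j' := by simp [Z', h]
      rw [this]
      obtain ⟨e1, e2, e3⟩ := hZ i' hi' j' hj'
      exact ⟨e1, e2, fun hne => (ncard_le_real
        (Set.inter_subset_inter_right _ (hBB _))).trans (e3 hne)⟩
  have hlt : μ Z < μ Z' := by
    have hterm : ∀ i' j', (Z i' j').ncard ≤ (Z' i' j').ncard := fun i' j' =>
      Set.ncard_le_ncard (hZZ' i' j') (Set.toFinite _)
    refine Finset.sum_lt_sum (fun i' _ => Finset.sum_le_sum fun j' _ => hterm i' j') ⟨i, hi, ?_⟩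
    refine Finset.sum_lt_sum (fun j' _ => hterm i j') ⟨j, hj, ?_⟩
    have : Z' i j = Z i j ∪ X := by simp [Z']
    rw [this, Set.ncard_union_eq hXd (Set.toFinite _) (Set.toFinite _)]
    have := (Set.ncard_pos (Set.toFinite X)).2 hXne
    omega
  exact absurd (hmax Z' hP) (by omega)

/-- Vertices with a neighbour in one of the first `n` levels. -/
def low (G : SimpleGraph V) (L : ℕ → Set V) (n : ℕ) : Set V :=
  {v | ∃ i < n, ∃ x ∈ L i, G.Adj x v}

/-- A rainbow sequence of levels inside the sets `B i`, `i ∈ F`. -/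
def Lev (G : SimpleGraph V) (F : Finset ℤ) (B : ℤ → Set V) (L : ℕ → Set V) (q : ℕ → ℤ)
    (n : ℕ) : Prop :=
  (∀ i ≤ n, q i ∈ F ∧ L i ⊆ B (q i)) ∧ (∀ i ≤ n, ∀ j ≤ n, q i = q j → i = j) ∧
  (∀ i < n, Covers G (L i) (L (i + 1))) ∧
  (∀ i j, i + 2 ≤ j → j ≤ n → Anticomplete G (L i) (L j))

lemma lev_extend (G : SimpleGraph V) (F : Finset ℤ) (B : ℤ → Set V) (L : ℕ → Set V)
    (q : ℕ → ℤ) (n : ℕ) (h : Lev G F B L q n) (T X : Set V) (hT : T ⊆ L n) (j : ℤ)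
    (hj : j ∈ F) (hjq : ∀ i ≤ n, j ≠ q i) (hX : X ⊆ nbhd G T ∩ (B j \ low G L n)) :
    ∃ (L' : ℕ → Set V) (q' : ℕ → ℤ), Lev G F B L' q' (n + 1) ∧ (∀ i < n, L' i = L i) ∧
      L' n = T ∧ L' (n + 1) = X ∧ (∀ i ≤ n, q' i = q i) ∧ q' (n + 1) = j ∧
      low G L' (n + 1) = low G L n ∪ nbhd G T := by
  obtain ⟨h1, h2, h3, h4⟩ := h
  obtain ⟨L', hL'⟩ : ∃ L' : ℕ → Set V, L' =
    fun i => if i < n then L i else if i = n then T else X := ⟨_, rfl⟩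
  obtain ⟨q', hq'⟩ : ∃ q' : ℕ → ℤ, q' = fun i => if i ≤ n then q i else j := ⟨_, rfl⟩
  have a1 : ∀ i < n, L' i = L i := fun i hi => by simp [hL', hi]
  have a2 : L' n = T := by simp [hL']
  have a3 : L' (n + 1) = X := by simp [hL']
  have a4 : ∀ i ≤ n, q' i = q i := fun i hi => by simp [hq', hi]
  have a5 : q' (n + 1) = j := by simp [hq']
  have a6 : ∀ i ≤ n, L' i ⊆ L i := by
    intro i hi
    rcases hi.lt_or_eq with h | rfl
    · rw [a1 i h]
    · rw [a2]; exact hT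
  refine ⟨L', q', ⟨?_, ?_, ?_, ?_⟩, a1, a2, a3, a4, a5, ?_⟩
  · intro i hi
    rcases hi.lt_or_eq with h | rfl
    · have hin : i ≤ n := by omega
      rw [a4 i hin]
      exact ⟨(h1 i hin).1, (a6 i hin).trans (h1 i hin).2⟩
    · rw [a5, a3]
      exact ⟨hj, fun x hx => (hX hx).2.1⟩
  · intro i hi i' hi' he
    rcases hi.lt_or_eq with h | rfl
    · rcases hi'.lt_or_eq with h' | rfl
      · rw [a4 i (by omega), a4 i' (by omega)] at he
        exact h2 i (by omega) i' (by omega) he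
      · rw [a4 i (by omega), a5] at he
        exact absurd he.symm (hjq i (by omega))
    · rcases hi'.lt_or_eq with h' | rfl
      · rw [a4 i' (by omega), a5] at he
        exact absurd he (hjq i' (by omega))
      · rfl
  · intro i hi
    rcases (Nat.lt_succ_iff.1 hi).lt_or_eq with h | rfl
    · intro b hb
      rw [a1 i h]
      exact h3 i h b (a6 (i + 1) (by omega) hb)
    · rw [a2, a3]
      intro b hb
      exact (hX hb).1
  · intro i i' hii hi' u hu v hv
    rcases hi'.lt_or_eq with h | rfl
    · exact h4 i i' hii (by omega) u (a6 i (by omega) hu) v (a6 i' (by omega) hv)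
    · rw [a1 i (by omega)] at hu
      rw [a3] at hv
      exact fun hadj => (hX hv).2.2 ⟨i, by omega, u, hu, hadj⟩
  · ext v
    constructor
    · rintro ⟨i, hi, x, hx, hadj⟩
      rcases (Nat.lt_succ_iff.1 hi).lt_or_eq with h | rfl
      · rw [a1 i h] at hx
        exact Or.inl ⟨i, h, x, hx, hadj⟩
      · rw [a2] at hx
        exact Or.inr ⟨x, hx, hadj⟩
    · rintro (⟨i, hi, x, hx, hadj⟩ | ⟨x, hx, hadj⟩)
      · exact ⟨i, by omega, x, by rw [a1 i hi]; exact hx, hadj⟩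
      · exact ⟨n, by omega, x, by rw [a2]; exact hx, hadj⟩

lemma lev [Finite V] (G : SimpleGraph V) (F : Finset ℤ) (a : ℤ → ℝ) (ha : ∀ i ∈ F, 0 < a i)
    (B : ℤ → Set V) (τ τ' θ η lam : ℝ) (ρ : ℕ) (hρ : 2 ≤ ρ) (hE : Exp G F a B τ θ)
    (hτ' : 4 ≤ τ') (hτ : τ' + 2 ≤ τ) (hlam : 0 ≤ lam) (hη : lam < η) (hη1 : η ≤ 1)
    (hθ : 3 * η ≤ θ)
    (hdeg : ∀ i ∈ F, ∀ j ∈ F, i ≠ j → ∀ v ∈ B i, ((nbhd G {v} ∩ B j).ncard : ℝ) ≤ lam * a j)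
    (hF : ρ ≤ F.card) (i0 : ℤ) (hi0 : i0 ∈ F) (z : V) (hz : z ∈ B i0)
    (hpow : a i0 ≤ τ' ^ (ρ - 1)) :
    ∃ (L : ℕ → Set V) (q : ℕ → ℤ) (m : ℕ), 1 ≤ m ∧ m ≤ ρ - 1 ∧ Lev G F B L q m ∧
      L 0 = {z} ∧ q 0 = i0 ∧ η * a (q m) ≤ ((L m).ncard : ℝ) ∧
      ∀ j ∈ F, (∀ i ≤ m, j ≠ q i) → ((low G L m ∩ B j).ncard : ℝ) ≤ (3 * η + lam) * a j := by
  classical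
  by_contra hdone
  have key : ∀ n, n ≤ ρ - 1 → ∃ (L : ℕ → Set V) (q : ℕ → ℤ) (x : ℝ), Lev G F B L q n ∧
      L 0 = {z} ∧ q 0 = i0 ∧ ((L n).ncard : ℝ) = x * a (q n) ∧ τ' ^ n ≤ x * a i0 ∧ x < η ∧
      0 < x ∧
      ∀ j ∈ F, (∀ i ≤ n, j ≠ q i) → ((low G L n ∩ B j).ncard : ℝ) ≤ 2 * x * a j := by
    intro n
    induction n with
    | zero =>
      intro _
      have ha0 := ha i0 hi0
      refine ⟨fun _ => {z}, fun _ => i0, 1 / a i0, ⟨?_, ?_, ?_, ?_⟩, rfl, rfl, ?_, ?_, ?_, ?_, ?_⟩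
      · intro i _
        exact ⟨hi0, by simpa using hz⟩
      · intro i hi j hj _
        omega
      · intro i hi; omega
      · intro i j h1 h2; omega
      · rw [Set.ncard_singleton]; field_simp; simp
      · simp only [pow_zero]; field_simp; exact le_rfl
      · by_contra hcon
        push Not at hcon
        obtain ⟨j, hj, hne⟩ : ∃ j ∈ F, j ≠ i0 :=
          Finset.exists_mem_ne (by omega) i0
        have e1 := hE i0 hi0 j hj hne.symm {z} (by simpa using hz)
        have e2 := hdeg i0 hi0 j hj hne.symm z hz
        rw [Set.ncard_singleton] at e1
        have e3 : 3 * η ≤ min (τ * (((1 : ℕ) : ℝ) / a i0)) θ := by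
          refine le_min ?_ hθ
          push_cast
          nlinarith
        have := ha j hj
        nlinarith
      · positivity
      · intro j hj _
        have := ha j hj
        have : low G (fun _ => ({z} : Set V)) 0 = ∅ := by
          ext v; simp [low]
        rw [this]
        simp only [Set.empty_inter, Set.ncard_empty, Nat.cast_zero]
        positivity
    | succ n ih =>
      intro hn
      obtain ⟨L, q, x, hL, hL0, hq0, hx, hxp, hxη, hx0, hlow⟩ := ih (by omega)
      let U := F.filter (fun j => ∀ i ≤ n, j ≠ q i)
      let D : ℤ → Set V := fun j => B j \ low G L n
      have hUF : ∀ j ∈ U, j ∈ F ∧ ∀ i ≤ n, j ≠ q i := fun j hj => by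
        simpa [U] using hj
      have hqn := (hL.1 n le_rfl)
      have hD : ∀ j ∈ U, min (τ * x) θ * a j - 2 * x * a j ≤ ((nbhd G (L n) ∩ D j).ncard : ℝ) := by
        intro j hj
        obtain ⟨hjF, hjq⟩ := hUF j hj
        have e1 := hE (q n) hqn.1 j hjF (hjq n le_rfl).symm (L n) hqn.2
        have han := ha _ hqn.1
        rw [hx, mul_div_assoc, div_self han.ne', mul_one] at e1
        have e2 := hlow j hjF hjq
        have e3 : nbhd G (L n) ∩ B j ⊆ (nbhd G (L n) ∩ D j) ∪ (low G L n ∩ B j) := by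
          intro v hv
          by_cases h : v ∈ low G L n
          · exact Or.inr ⟨h, hv.2⟩
          · exact Or.inl ⟨hv.1, hv.2, h⟩
        have e4 := (ncard_le_real e3).trans (ncard_union_real _ _)
        linarith
      by_cases hbig : ∃ j ∈ U, η * a j ≤ ((nbhd G (L n) ∩ D j).ncard : ℝ)
      · exfalso
        apply hdone
        obtain ⟨T, hT, ⟨j, hj, hjT⟩, hall⟩ := prune G U a (fun i hi => (ha i (hUF i hi).1).le) D
          (L n) η lam (hlam.trans hη.le) hlam (fun v hv i hi => by
            obtain ⟨hjF, hjq⟩ := hUF i hi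
            exact (ncard_le_real (Set.inter_subset_inter_right _ Set.sdiff_subset)).trans
              (hdeg (q n) hqn.1 i hjF (hjq n le_rfl).symm v (hqn.2 hv))) hbig
        obtain ⟨hjF, hjq⟩ := hUF j hj
        obtain ⟨L', q', g1, g2, g3, g4, g5, g6, g7⟩ :=
          lev_extend G F B L q n hL T (nbhd G T ∩ D j) hT j hjF hjq subset_rfl
        refine ⟨L', q', n + 1, by omega, hn, g1, ?_, ?_, ?_, ?_⟩
        · rcases Nat.eq_zero_or_pos n with rfl | hpos
          · rw [g3]
            rw [hL0] at hT
            rcases Set.subset_singleton_iff_eq.1 hT with h | h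
            · exfalso
              rw [h, nbhd_empty] at hjT
              simp only [Set.empty_inter, Set.ncard_empty, Nat.cast_zero] at hjT
              have := ha j hjF
              nlinarith
            · exact h
          · rw [g2 0 hpos, hL0]
        · rw [g5 0 (by omega), hq0]
        · rw [g6, g4]; exact hjT
        · intro i hi hiq
          have hiU : i ∈ U := by
            simp only [U, Finset.mem_filter]
            refine ⟨hi, fun l hl => ?_⟩
            rw [← g5 l hl]
            exact hiq l (by omega)
          have e1 := hall i hiU
          have e2 := hlow i hi (hUF i hiU).2
          rw [g7]
          have e3 : (low G L n ∪ nbhd G T) ∩ B i ⊆ (low G L n ∩ B i) ∪ (nbhd G T ∩ D i) := by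
            rintro v ⟨hv, hvB⟩
            by_cases h : v ∈ low G L n
            · exact Or.inl ⟨h, hvB⟩
            · rcases hv with hv | hv
              · exact absurd hv h
              · exact Or.inr ⟨hv, hvB, h⟩
          have e4 := (ncard_le_real e3).trans (ncard_union_real _ _)
          have := ha i hi
          nlinarith
      · push Not at hbig
        have hUne : U.Nonempty := by
          by_contra hne
          rw [Finset.not_nonempty_iff_eq_empty] at hne
          have : F ⊆ (Finset.range (n + 1)).image q := by
            intro j hj
            by_contra hjn
            have : j ∈ U := by
              simp only [U, Finset.mem_filter]
              refine ⟨hj, fun i hi he => hjn ?_⟩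
              exact Finset.mem_image.2 ⟨i, by simp; omega, he.symm⟩
            rw [hne] at this
            simp at this
          have h1 := (Finset.card_le_card this).trans Finset.card_image_le
          rw [Finset.card_range] at h1
          omega
        obtain ⟨j, hj, hjmax⟩ := Finset.exists_max_image U
          (fun j => ((nbhd G (L n) ∩ D j).ncard : ℝ) / a j) hUne
        obtain ⟨hjF, hjq⟩ := hUF j hj
        have haj := ha j hjF
        set y : ℝ := ((nbhd G (L n) ∩ D j).ncard : ℝ) / a j with hy
        have hya : ((nbhd G (L n) ∩ D j).ncard : ℝ) = y * a j := by
          rw [hy]; field_simp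
        have hyη : y < η := by
          have := hbig j hj
          rw [hya] at this
          exact lt_of_mul_lt_mul_right this haj.le
        have hyx : τ' * x ≤ y := by
          have e1 := hD j hj
          rw [hya, ← sub_mul] at e1
          have e2 := le_of_mul_le_mul_right e1 haj
          rcases min_choice (τ * x) θ with h | h
          · rw [h] at e2; nlinarith
          · rw [h] at e2; nlinarith
        obtain ⟨L', q', g1, g2, g3, g4, g5, g6, g7⟩ :=
          lev_extend G F B L q n hL (L n) (nbhd G (L n) ∩ D j) subset_rfl j hjF hjq subset_rfl
        refine ⟨L', q', y, g1, ?_, ?_, ?_, ?_, hyη, ?_, ?_⟩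
        · rcases Nat.eq_zero_or_pos n with rfl | hpos
          · rw [g3, hL0]
          · rw [g2 0 hpos, hL0]
        · rw [g5 0 (by omega), hq0]
        · rw [g6, g4, hya]
        · have h0 := ha i0 hi0
          calc τ' ^ (n + 1) = τ' * τ' ^ n := by ring
            _ ≤ τ' * (x * a i0) := mul_le_mul_of_nonneg_left hxp (by linarith)
            _ = (τ' * x) * a i0 := by ring
            _ ≤ y * a i0 := mul_le_mul_of_nonneg_right hyx h0.le
        · nlinarith
        · intro i hi hiq
          have hiU : i ∈ U := by
            simp only [U, Finset.mem_filter]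
            refine ⟨hi, fun l hl => ?_⟩
            rw [← g5 l hl]
            exact hiq l (by omega)
          have hai := ha i hi
          have e1 := hjmax i hiU
          rw [div_le_iff₀ hai] at e1
          have e2 := hlow i hi (hUF i hiU).2
          rw [g7]
          have e3 : (low G L n ∪ nbhd G (L n)) ∩ B i
              ⊆ (low G L n ∩ B i) ∪ (nbhd G (L n) ∩ D i) := by
            rintro v ⟨hv, hvB⟩
            by_cases h : v ∈ low G L n
            · exact Or.inl ⟨h, hvB⟩
            · rcases hv with hv | hv
              · exact absurd hv h
              · exact Or.inr ⟨hv, hvB, h⟩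
          have e4 := (ncard_le_real e3).trans (ncard_union_real _ _)
          have e5 : 2 * x ≤ y := by nlinarith
          nlinarith
  obtain ⟨L, q, x, -, -, -, -, hxp, hxη, hx0, -⟩ := key (ρ - 1) le_rfl
  have h0 := ha i0 hi0
  nlinarith

lemma levelling_reaches (G : SimpleGraph V) (L : ℕ → Set V) (a : ℕ) (C : Set V) (ha : 1 ≤ a)
    (h0 : (L 0).ncard = 1)
    (hd : ∀ i ≤ a, ∀ j ≤ a, i ≠ j → Disjoint (L i) (L j))
    (hdC : ∀ i ≤ a, Disjoint (L i) C)
    (hc : ∀ i < a, Covers G (L i) (L (i + 1))) (hcC : Covers G (L a) C)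
    (hn : ∀ i j, i + 2 ≤ j → j ≤ a → Anticomplete G (L i) (L j))
    (hnC : ∀ i < a, Anticomplete G (L i) C) : IsLevelling G L a ∧ Reaches G L a C := by
  constructor
  · refine ⟨ha, h0, hd, ?_, ?_⟩
    · intro i hi1 hi
      have := hc (i - 1) (by omega)
      rwa [Nat.sub_add_cancel hi1] at this
    · intro i _ hi h hh
      exact hn h i hh hi
  · have e1 : ∀ i ≤ a, (fun i => if i = a + 1 then C else L i) i = L i := by
      intro i hi
      have : i ≠ a + 1 := by omega
      simp [this]
    have e2 : (fun i => if i = a + 1 then C else L i) (a + 1) = C := by simp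
    unfold Reaches
    generalize (fun i => if i = a + 1 then C else L i) = X at e1 e2
    refine ⟨by omega, ?_, ?_, ?_, ?_⟩
    · rw [e1 0 (by omega)]; exact h0
    · intro i hi j hj hij
      rcases hi.lt_or_eq with h | rfl
      · rcases hj.lt_or_eq with h' | rfl
        · rw [e1 i (by omega), e1 j (by omega)]
          exact hd i (by omega) j (by omega) hij
        · rw [e1 i (by omega), e2]
          exact hdC i (by omega)
      · rcases hj.lt_or_eq with h' | rfl
        · rw [e1 j (by omega), e2]
          exact (hdC j (by omega)).symm
        · exact absurd rfl hij
    · intro i hi1 hi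
      rcases hi.lt_or_eq with h | rfl
      · rw [e1 i (by omega), e1 (i - 1) (by omega)]
        have := hc (i - 1) (by omega)
        rwa [Nat.sub_add_cancel hi1] at this
      · rw [e2, Nat.add_sub_cancel, e1 a le_rfl]
        exact hcC
    · intro i _ hi h hh
      rcases hi.lt_or_eq with h' | rfl
      · rw [e1 i (by omega), e1 h (by omega)]
        exact hn h i hh (by omega)
      · rw [e2, e1 h (by omega)]
        exact hnC h (by omega)

/-- `Reach G Q p i j l u`: there is a descending path from `p i` via `Q j, Q (j+1), …` to
the vertex `u ∈ Q l`. -/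
inductive Reach (G : SimpleGraph V) (Q : ℕ → Set V) (p : ℕ → V) (i j : ℕ) : ℕ → V → Prop
  | base (u : V) (hu : u ∈ Q j) (h : G.Adj (p i) u) : Reach G Q p i j j u
  | step (l : ℕ) (u v : V) (hu : Reach G Q p i j l u) (h : G.Adj u v) (hv : v ∈ Q (l + 1)) :
      Reach G Q p i j (l + 1) v

lemma Reach.mem {G : SimpleGraph V} {Q : ℕ → Set V} {p : ℕ → V} {i j l : ℕ} {u : V}
    (h : Reach G Q p i j l u) : u ∈ Q l ∧ j ≤ l := by
  induction h with
  | base u hu h => exact ⟨hu, le_rfl⟩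
  | step l u v hu h hv ih => exact ⟨hv, by omega⟩

/-- The part of `Q l` of class `(i,j)`. -/
def Cls (G : SimpleGraph V) (Q : ℕ → Set V) (p : ℕ → V) (ρ i j l : ℕ) (m' : ℕ) : Set V :=
  {u | Reach G Q p i j l u ∧ ∀ i' ≤ m', ∀ j' < ρ, ρ * i + j < ρ * i' + j' →
    ¬ Reach G Q p i' j' l u}

lemma exists_cls (G : SimpleGraph V) (Q : ℕ → Set V) (p : ℕ → V) (ρ m m' : ℕ) (hm1 : 1 ≤ m)
    (hm : m < ρ)
    (hQ1 : ∀ u ∈ Q 1, G.Adj (p 0) u)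
    (hQc : ∀ l, 1 ≤ l → l < m → Covers G (Q l) (Q (l + 1)))
    (hpos : ∀ i j l u, Reach G Q p i j l u → 1 ≤ j)
    (y : V) (hy : y ∈ Q m) :
    ∃ i j, i ≤ m' ∧ 1 ≤ j ∧ j ≤ m ∧ y ∈ Cls G Q p ρ i j m m' := by
  classical
  have hr : ∀ l, 1 ≤ l → l ≤ m → ∀ u ∈ Q l, Reach G Q p 0 1 l u := by
    intro l hl
    induction l, hl using Nat.le_induction with
    | base => intro _ u hu; exact Reach.base u hu (hQ1 u hu)
    | succ l hl ih =>
      intro hlm u hu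
      obtain ⟨v, hv, hadj⟩ := hQc l hl (by omega) u hu
      exact Reach.step l v u (ih (by omega) v hv) hadj hu
  let X := ((Finset.range (m' + 1)) ×ˢ (Finset.range ρ)).filter
    (fun e => Reach G Q p e.1 e.2 m y)
  have hX : X.Nonempty := ⟨(0, 1), by
    simp only [X, Finset.mem_filter, Finset.mem_product, Finset.mem_range]
    exact ⟨⟨by omega, by omega⟩, hr m hm1 le_rfl y hy⟩⟩
  obtain ⟨e, he, hmax⟩ := Finset.exists_max_image X (fun e => ρ * e.1 + e.2) hX
  simp only [X, Finset.mem_filter, Finset.mem_product, Finset.mem_range] at he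
  refine ⟨e.1, e.2, by omega, hpos _ _ _ _ he.2, he.2.mem.2, he.2, ?_⟩
  intro i' hi' j' hj' hlt hre
  have := hmax (i', j') (by
    simp only [X, Finset.mem_filter, Finset.mem_product, Finset.mem_range]
    exact ⟨⟨by omega, hj'⟩, hre⟩)
  simp only at this
  omega

lemma assemble [Finite V] (G : SimpleGraph V) (I : Finset ℤ) (A : ℤ → Set V)
    (hA : IsBlockade I A) (k ρ n : ℕ) (hk : 1 ≤ k) (hρ : 2 ≤ ρ) (hn : k * ρ ^ 3 ≤ n)
    (μ : ℝ) (hμ : 0 < μ) (m m' h : ℕ) (hm1 : 1 ≤ m) (hm : m ≤ ρ - 1) (hm' : m' ≤ ρ - 1)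
    (hh : h ≤ ρ - 1) (Q : ℕ → Set V) (qQ : ℕ → ℤ) (hQ0 : Q 0 = ∅)
    (hQ : ∀ l, 1 ≤ l → l ≤ m → qQ l ∈ I ∧ Q l ⊆ A (qQ l))
    (hQi : ∀ l, 1 ≤ l → l ≤ m → ∀ l', 1 ≤ l' → l' ≤ m → qQ l = qQ l' → l = l')
    (hQc : ∀ l, 1 ≤ l → l < m → Covers G (Q l) (Q (l + 1)))
    (hQa : ∀ l l', 1 ≤ l → l + 2 ≤ l' → l' ≤ m → Anticomplete G (Q l) (Q l'))
    (p : ℕ → V) (hQ1 : ∀ u ∈ Q 1, G.Adj (p 0) u)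
    (N : ℕ → Set V) (qN : ℕ → ℤ) (hN : ∀ i ≤ m' + h, qN i ∈ I ∧ N i ⊆ A (qN i))
    (hNi : ∀ i ≤ m' + h, ∀ j ≤ m' + h, qN i = qN j → i = j)
    (hNp : ∀ i ≤ m', N i = {p i})
    (hNc : ∀ i < m' + h, Covers G (N i) (N (i + 1)))
    (hNa : ∀ i j, i + 2 ≤ j → j ≤ m' + h → Anticomplete G (N i) (N j))
    (hQN : ∀ l, 1 ≤ l → l ≤ m → ∀ i ≤ m' + h, qQ l ≠ qN i)
    (hNQ : ∀ i, m' < i → i ≤ m' + h → ∀ l, 1 ≤ l → l ≤ m → Anticomplete G (N i) (Q l))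
    (Y : ℕ → Set V) (c : ℕ → ℤ) (C : ℕ → Set V)
    (hc : ∀ s < n, c s ∈ I ∧ C s ⊆ A (c s))
    (hci : ∀ s < n, ∀ s' < n, c s = c s' → s = s')
    (hcQ : ∀ s < n, ∀ l, 1 ≤ l → l ≤ m → c s ≠ qQ l)
    (hcN : ∀ s < n, ∀ i ≤ m' + h, c s ≠ qN i)
    (hCY : ∀ s < n, C s ⊆ nbhd G (Y s)) (hYQ : ∀ s < n, Y s ⊆ Q m)
    (hYm : ∀ s s', s ≤ s' → s' < n → Y s ⊆ Y s')
    (hCYd : ∀ s < n, ∀ s' < s, Disjoint (C s) (nbhd G (Y s')))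
    (hCQ : ∀ s < n, ∀ l, 1 ≤ l → l < m → Anticomplete G (Q l) (C s))
    (hCp : ∀ s < n, ∀ i ≤ m', ∀ x ∈ C s, ¬ G.Adj (p i) x)
    (hCT : ∀ s < n, ∀ x ∈ C s, ∃ t, 1 ≤ t ∧ t ≤ h ∧ x ∈ nbhd G (N (m' + t)))
    (hsz : ∀ s < n, (ρ : ℝ) ^ 3 * μ * ((A (c s)).ncard : ℝ) ≤ ((C s).ncard : ℝ)) :
    ∃ (L : ℕ → Set V) (a : ℕ) (M : ℕ → Set V) (b : ℕ) (J : Finset ℤ) (C : ℤ → Set V),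
      IsBiLevelling G L a M b J C ∧ RainbowBiLevelling I A L a M b J C ∧
      J.card = k ∧ a + b ≤ m + m' + h ∧ SizeGE I A J C μ := by
  classical
  have hpos : ∀ i j l u, Reach G Q p i j l u → 1 ≤ j := by
    intro i j l u hr
    induction hr with
    | base u hu h =>
      by_contra hj
      have : j = 0 := by omega
      rw [this, hQ0] at hu
      exact hu
    | step l u v hu h hv ih => exact ih
  -- classes
  let P : ℕ → ℕ × ℕ × ℕ → V → Prop := fun s e x =>
    (∃ y ∈ Y s, G.Adj y x ∧ y ∈ Cls G Q p ρ e.1 e.2.1 m m') ∧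
    x ∈ nbhd G (N (m' + e.2.2)) ∧ (∀ t', 1 ≤ t' → t' < e.2.2 → x ∉ nbhd G (N (m' + t'))) ∧
    e.1 ≤ m' ∧ 1 ≤ e.2.1 ∧ e.2.1 ≤ m ∧ 1 ≤ e.2.2 ∧ e.2.2 ≤ h
  let E : Finset (ℕ × ℕ × ℕ) := Finset.range ρ ×ˢ (Finset.range ρ ×ˢ Finset.range ρ)
  have hEcard : E.card = ρ ^ 3 := by
    simp only [E, Finset.card_product, Finset.card_range]; ring
  have hP : ∀ s < n, ∀ x ∈ C s, ∃ e ∈ E, P s e x := by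
    intro s hs x hx
    obtain ⟨y, hy, hadj⟩ := hCY s hs hx
    obtain ⟨i, j, hi, hj1, hj, hcl⟩ := exists_cls G Q p ρ m m' hm1 (by omega) hQ1 hQc hpos y
      (hYQ s hs hy)
    have hT := hCT s hs x hx
    have hT1 := Nat.find_spec hT
    have hT2 : ∀ t', 1 ≤ t' → t' < Nat.find hT → x ∉ nbhd G (N (m' + t')) := by
      intro t' ht1 ht hmem
      exact Nat.find_min hT ht ⟨ht1, by omega, hmem⟩
    refine ⟨(i, j, Nat.find hT), ?_, ⟨y, hy, hadj, hcl⟩, hT1.2.2, hT2, hi, hj1, hj, hT1.1, hT1.2.1⟩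
    simp only [E, Finset.mem_product, Finset.mem_range]
    exact ⟨by omega, by omega, by have := hT1.2.1; omega⟩
  let D : ℕ → ℕ × ℕ × ℕ → Set V := fun s e => {x | x ∈ C s ∧ P s e x}
  have hbig : ∀ s < n, ∃ e ∈ E, μ * ((A (c s)).ncard : ℝ) ≤ ((D s e).ncard : ℝ) := by
    intro s hs
    by_contra hcon
    push Not at hcon
    have h1 : C s ⊆ ⋃ e ∈ E, D s e := by
      intro x hx
      obtain ⟨e, he, hPe⟩ := hP s hs x hx
      exact Set.mem_biUnion he ⟨hx, hPe⟩
    have h2 : ((C s).ncard : ℝ) ≤ ∑ e ∈ E, ((D s e).ncard : ℝ) := by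
      have := (Set.ncard_le_ncard h1 (Set.toFinite _)).trans (Finset.set_ncard_biUnion_le E (D s))
      exact_mod_cast this
    have hEne : E.Nonempty := by
      rw [← Finset.card_pos, hEcard]; positivity
    have h3 := Finset.sum_lt_sum_of_nonempty hEne hcon
    rw [Finset.sum_const, hEcard, nsmul_eq_mul] at h3
    have h4 := hsz s hs
    push_cast at h3
    linarith
  choose! f hfE hf using hbig
  have hEne : E.Nonempty := by
    rw [← Finset.card_pos, hEcard]; positivity
  obtain ⟨e, -, hek⟩ := Finset.exists_le_card_fiber_of_mul_le_card_of_maps_to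
    (s := Finset.range n) (t := E) (f := f) (n := k)
    (fun s hs => hfE s (Finset.mem_range.1 hs)) hEne
    (by rw [hEcard, Finset.card_range]; linarith)
  obtain ⟨S, hS, hScard⟩ := Finset.exists_subset_card_eq hek
  have hSn : ∀ s ∈ S, s < n ∧ f s = e := fun s hs => by
    simpa using hS hs
  obtain ⟨i, j, t⟩ := e
  let J : Finset ℤ := S.image (fun s : ℕ => -(s : ℤ))
  let C' : ℤ → Set V := fun z => D z.natAbs (i, j, t)
  have hJ : ∀ z ∈ J, ∃ s ∈ S, z = -(s : ℤ) ∧ z.natAbs = s := by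
    intro z hz
    obtain ⟨s, hs, rfl⟩ := Finset.mem_image.1 hz
    exact ⟨s, hs, rfl, by simp⟩
  have hJcard : J.card = k := by
    rw [Finset.card_image_of_injective, hScard]
    intro x y hxy
    simpa using hxy
  have hC'D : ∀ s : ℕ, C' (-(s : ℤ)) = D s (i, j, t) := fun s => by simp [C']
  have hDsz : ∀ s ∈ S, μ * ((A (c s)).ncard : ℝ) ≤ ((D s (i, j, t)).ncard : ℝ) := by
    intro s hs
    obtain ⟨h1, h2⟩ := hSn s hs
    have := hf s h1
    rwa [h2] at this
  have hApos : ∀ q ∈ I, 0 < ((A q).ncard : ℝ) := by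
    intro q hq
    exact_mod_cast (Set.ncard_pos (Set.toFinite _)).2 (hA.1 q hq)
  have hDne : ∀ s ∈ S, (D s (i, j, t)).Nonempty := by
    intro s hs
    rw [← Set.ncard_pos (Set.toFinite _)]
    have h1 := hDsz s hs
    have h2 := hApos _ (hc s (hSn s hs).1).1
    have : 0 < ((D s (i, j, t)).ncard : ℝ) := lt_of_lt_of_le (by positivity) h1
    exact_mod_cast this
  have hDA : ∀ s ∈ S, D s (i, j, t) ⊆ A (c s) := fun s hs x hx =>
    (hc s (hSn s hs).1).2 hx.1
  have hAd : ∀ q ∈ I, ∀ q' ∈ I, q ≠ q' → ∀ X ⊆ A q, ∀ X' ⊆ A q', Disjoint X X' :=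
    fun q hq q' hq' hne X hX X' hX' => Set.disjoint_of_subset hX hX' (hA.2 q hq q' hq' hne)
  have hSne : S.Nonempty := by
    rw [← Finset.card_pos]; omega
  obtain ⟨hi, hj1, hj, ht1, ht⟩ : i ≤ m' ∧ 1 ≤ j ∧ j ≤ m ∧ 1 ≤ t ∧ t ≤ h := by
    obtain ⟨s, hs⟩ := hSne
    obtain ⟨x, hx⟩ := hDne s hs
    exact hx.2.2.2.2
  -- the levellings
  obtain ⟨L, hL⟩ : ∃ L : ℕ → Set V, L = fun s => if s = 0 then {p i} else
    Cls G Q p ρ i j (j + s - 1) m' := ⟨_, rfl⟩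
  obtain ⟨M, hM⟩ : ∃ M : ℕ → Set V, M = fun s => N (i + s) := ⟨_, rfl⟩
  have hL0 : L 0 = {p i} := by simp [hL]
  have hLs : ∀ s, L (s + 1) = Cls G Q p ρ i j (j + s) m' := fun s => by
    simp [hL]
  have hLQ : ∀ s, L (s + 1) ⊆ Q (j + s) := fun s u hu => by
    rw [hLs] at hu
    exact hu.1.mem.1
  have hM0 : M 0 = {p i} := by simp [hM, hNp i hi]
  have hMs : ∀ s, M s = N (i + s) := fun s => by simp [hM]
  obtain ⟨ql, hql⟩ : ∃ ql : ℕ → ℤ, ql = fun s => if s = 0 then qN i else qQ (j + s - 1) :=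
    ⟨_, rfl⟩
  have hql0 : ql 0 = qN i := by simp [hql]
  have hqls : ∀ s, ql (s + 1) = qQ (j + s) := fun s => by simp [hql]
  set a := m - j + 1 with haa
  set b := m' - i + t with hbb
  have hLA : ∀ s ≤ a, ql s ∈ I ∧ L s ⊆ A (ql s) := by
    intro s hs
    cases s with
    | zero =>
      rw [hql0, hL0, ← hNp i hi]
      exact hN i (by omega)
    | succ s =>
      rw [hqls]
      have := hQ (j + s) (by omega) (by omega)
      exact ⟨this.1, (hLQ s).trans this.2⟩
  have hqli : ∀ s ≤ a, ∀ s' ≤ a, ql s = ql s' → s = s' := by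
    intro s hs s' hs' he
    cases s with
    | zero =>
      cases s' with
      | zero => rfl
      | succ s' =>
        rw [hql0, hqls] at he
        exact absurd he.symm (hQN _ (by omega) (by omega) _ (by omega))
    | succ s =>
      cases s' with
      | zero =>
        rw [hql0, hqls] at he
        exact absurd he (hQN _ (by omega) (by omega) _ (by omega))
      | succ s' =>
        rw [hqls, hqls] at he
        have := hQi _ (by omega) (by omega) _ (by omega) (by omega) he
        omega
  have hMA : ∀ s ≤ b, qN (i + s) ∈ I ∧ M s ⊆ A (qN (i + s)) := by
    intro s hs
    rw [hMs]
    exact hN _ (by omega)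
  have hcl : ∀ s ∈ S, ∀ s' ≤ a, c s ≠ ql s' := by
    intro s hs s' hs'
    cases s' with
    | zero => rw [hql0]; exact hcN s (hSn s hs).1 i (by omega)
    | succ s' => rw [hqls]; exact hcQ s (hSn s hs).1 _ (by omega) (by omega)
  have hU : ∀ x, x ∈ (⋃ z ∈ J, C' z) ↔ ∃ s ∈ S, x ∈ D s (i, j, t) := by
    intro x
    simp only [Set.mem_iUnion]
    constructor
    · rintro ⟨z, hz, hx⟩
      obtain ⟨s, hs, rfl, -⟩ := hJ z hz
      rw [hC'D] at hx
      exact ⟨s, hs, hx⟩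
    · rintro ⟨s, hs, hx⟩
      exact ⟨-(s : ℤ), Finset.mem_image_of_mem _ hs, by rw [hC'D]; exact hx⟩
  -- key: later path vertices are anticomplete to the classes
  have hpL : ∀ i' ≤ m', i < i' → ∀ s, s + 1 ≤ a → Anticomplete G {p i'} (L (s + 1)) := by
    intro i' hi' hii s hs x hx u hu hadj
    rw [Set.mem_singleton_iff] at hx
    subst hx
    have hu' := hLQ s hu
    rw [hLs] at hu
    refine hu.2 i' hi' (j + s) (by omega) ?_ (Reach.base u hu' hadj)
    have : ρ * (i + 1) ≤ ρ * i' := Nat.mul_le_mul_left _ hii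
    nlinarith
  have hLlev : IsLevelling G L a ∧ Reaches G L a (⋃ z ∈ J, C' z) := by
    refine levelling_reaches G L a _ (by omega) (by rw [hL0, Set.ncard_singleton]) ?_ ?_ ?_ ?_ ?_ ?_
    · intro s hs s' hs' hne
      exact hAd _ (hLA s hs).1 _ (hLA s' hs').1 (fun he => hne (hqli s hs s' hs' he)) _
        (hLA s hs).2 _ (hLA s' hs').2
    · intro s' hs'
      rw [Set.disjoint_left]
      intro x hx hxU
      obtain ⟨s, hs, hxs⟩ := (hU x).1 hxU
      exact Set.disjoint_left.1 (hAd _ (hLA s' hs').1 _ (hc s (hSn s hs).1).1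
        (hcl s hs s' hs').symm _ (hLA s' hs').2 _ (hDA s hs)) hx hxs
    · intro s hs u hu
      rw [hLs] at hu
      cases s with
      | zero =>
        refine ⟨p i, by rw [hL0]; rfl, ?_⟩
        obtain ⟨hr, -⟩ := hu
        generalize hl : j + 0 = l at hr
        cases hr with
        | base _ _ h => exact h
        | step l v _ hv h _ =>
          have := hv.mem.2
          omega
      | succ s =>
        obtain ⟨hr, hno⟩ := hu
        generalize hl : j + (s + 1) = l at hr
        cases hr with
        | base _ _ h => omega
        | step l v _ hv h hu2 =>
          have hl' : l = j + s := by omega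
          subst hl'
          refine ⟨v, ?_, h⟩
          rw [hLs]
          refine ⟨hv, fun i' hi' j' hj' hlt hre => ?_⟩
          exact hno i' hi' j' hj' hlt (Reach.step _ v u hre h hu2)
    · intro x hx
      obtain ⟨s, hs, hxs⟩ := (hU x).1 hx
      obtain ⟨y, hy, hadj, hcls⟩ := hxs.2.1
      refine ⟨y, ?_, hadj⟩
      rw [haa, hLs]
      have : j + (m - j) = m := by omega
      rw [this]
      exact hcls
    · intro s s' hss hs'
      cases s' with
      | zero => omega
      | succ s' =>
        cases s with
        | zero =>
          intro x hx u hu hadj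
          rw [hL0, Set.mem_singleton_iff] at hx
          subst hx
          have hu' := hLQ s' hu
          rw [hLs] at hu
          exact hu.2 i hi (j + s') (by omega) (by omega) (Reach.base u hu' hadj)
        | succ s =>
          intro x hx u hu
          exact hQa (j + s) (j + s') (by omega) (by omega) (by omega) x (hLQ s hx) u (hLQ s' hu)
    · intro s' hs' u hu x hx
      obtain ⟨s, hs, hxs⟩ := (hU x).1 hx
      cases s' with
      | zero =>
        rw [hL0, Set.mem_singleton_iff] at hu
        subst hu
        exact hCp s (hSn s hs).1 i hi x hxs.1
      | succ s' =>
        exact hCQ s (hSn s hs).1 (j + s') (by omega) (by omega) u (hLQ s' hu) x hxs.1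
  have hMlev : IsLevelling G M b ∧ Reaches G M b (⋃ z ∈ J, C' z) := by
    refine levelling_reaches G M b _ (by omega) (by rw [hM0, Set.ncard_singleton]) ?_ ?_ ?_ ?_ ?_ ?_
    · intro s hs s' hs' hne
      refine hAd _ (hMA s hs).1 _ (hMA s' hs').1 (fun he => hne ?_) _
        (hMA s hs).2 _ (hMA s' hs').2
      have := hNi _ (by omega) _ (by omega) he
      omega
    · intro s' hs'
      rw [Set.disjoint_left]
      intro x hx hxU
      obtain ⟨s, hs, hxs⟩ := (hU x).1 hxU
      exact Set.disjoint_left.1 (hAd _ (hMA s' hs').1 _ (hc s (hSn s hs).1).1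
        (hcN s (hSn s hs).1 _ (by omega)).symm _ (hMA s' hs').2 _ (hDA s hs)) hx hxs
    · intro s hs
      rw [hMs, hMs]
      exact hNc (i + s) (by omega)
    · intro x hx
      obtain ⟨s, hs, hxs⟩ := (hU x).1 hx
      rw [hMs]
      have : i + b = m' + t := by omega
      rw [this]
      exact hxs.2.2.1
    · intro s s' hss hs'
      rw [hMs, hMs]
      exact hNa _ _ (by omega) (by omega)
    · intro s' hs' u hu x hx hadj
      obtain ⟨s, hs, hxs⟩ := (hU x).1 hx
      rw [hMs] at hu
      by_cases hle : i + s' ≤ m'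
      · rw [hNp _ hle, Set.mem_singleton_iff] at hu
        subst hu
        exact hCp s (hSn s hs).1 _ hle x hxs.1 hadj
      · refine hxs.2.2.2.1 (i + s' - m') (by omega) (by simp only; omega) ⟨u, ?_, hadj⟩
        have : m' + (i + s' - m') = i + s' := by omega
        rw [this]
        exact hu
  refine ⟨L, a, M, b, J, C', ⟨⟨?_, ?_⟩, hLlev.1, hMlev.1, ⟨?_, ?_, ?_⟩, hMlev.2, hLlev.2, ?_⟩,
    ⟨fun z => c z.natAbs, ql, fun s => qN (i + s), ?_, hLA, ?_, ?_, hqli, ?_, ?_, ?_, ?_⟩,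
    hJcard, by omega, ?_⟩
  · intro z hz
    obtain ⟨s, hs, rfl, -⟩ := hJ z hz
    rw [hC'D]
    exact hDne s hs
  · intro z hz z' hz' hne
    obtain ⟨s, hs, rfl, -⟩ := hJ z hz
    obtain ⟨s', hs', rfl, -⟩ := hJ z' hz'
    rw [hC'D, hC'D]
    refine hAd _ (hc s (hSn s hs).1).1 _ (hc s' (hSn s' hs').1).1 (fun he => hne ?_) _
      (hDA s hs) _ (hDA s' hs')
    rw [hci s (hSn s hs).1 s' (hSn s' hs').1 he]
  · rw [hL0, hM0]
  · rw [Set.disjoint_left]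
    intro x hx hx'
    simp only [Set.mem_iUnion, Finset.mem_Icc] at hx hx'
    obtain ⟨s, hs, hxs⟩ := hx
    obtain ⟨s', hs', hxs'⟩ := hx'
    obtain ⟨s', rfl⟩ : ∃ r, s' = r + 1 := ⟨s' - 1, by omega⟩
    have h1 := hMA s hs.2
    have h2 := hLA (s' + 1) hs'.2
    refine Set.disjoint_left.1 (hAd _ h1.1 _ h2.1 ?_ _ h1.2 _ h2.2) hxs hxs'
    rw [hqls]
    exact (hQN _ (by omega) (by omega) _ (by omega)).symm
  · intro x hx u hu
    simp only [Set.mem_iUnion, Finset.mem_Icc] at hx hu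
    obtain ⟨s, hs, hxs⟩ := hx
    obtain ⟨s', hs', hus⟩ := hu
    obtain ⟨s', rfl⟩ : ∃ r, s' = r + 1 := ⟨s' - 1, by omega⟩
    rw [hMs] at hxs
    by_cases hle : i + s ≤ m'
    · rw [hNp _ hle] at hxs
      exact hpL (i + s) hle (by omega) s' hs'.2 x hxs u hus
    · exact hNQ (i + s) (by omega) (by omega) (j + s') (by omega) (by omega) x hxs u (hLQ s' hus)
  · intro z hz
    obtain ⟨s, hs, rfl, -⟩ := hJ z hz
    refine ⟨Y s ∩ L a, Set.inter_subset_right, ?_, ?_⟩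
    · intro z' hz' hle x hx
      obtain ⟨s', hs', rfl, -⟩ := hJ z' hz'
      rw [hC'D] at hx
      obtain ⟨y, hy, hadj, hcls⟩ := hx.2.1
      refine ⟨y, ⟨hYm s' s (by omega) (hSn s hs).1 hy, ?_⟩, hadj⟩
      rw [haa, hLs]
      have : j + (m - j) = m := by omega
      rw [this]
      exact hcls
    · intro z' hz' hlt y hy x hx hadj
      obtain ⟨s', hs', rfl, -⟩ := hJ z' hz'
      rw [hC'D] at hx
      exact Set.disjoint_left.1 (hCYd s' (hSn s' hs').1 s (by omega)) hx.1 ⟨y, hy.1, hadj⟩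
  · intro z hz
    obtain ⟨s, hs, rfl, he⟩ := hJ z hz
    beta_reduce
    rw [hC'D, he]
    exact ⟨(hc s (hSn s hs).1).1, hDA s hs⟩
  · intro s _ hs
    exact hMA s hs
  · intro z hz z' hz' he
    obtain ⟨s, hs, rfl, e1⟩ := hJ z hz
    obtain ⟨s', hs', rfl, e2⟩ := hJ z' hz'
    beta_reduce at he
    rw [e1, e2] at he
    rw [hci s (hSn s hs).1 s' (hSn s' hs').1 he]
  · intro s _ hs s' _ hs' he
    have := hNi _ (by omega) _ (by omega) he
    omega
  · intro z hz s' hs'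
    obtain ⟨s, hs, rfl, e1⟩ := hJ z hz
    beta_reduce
    rw [e1]
    exact hcl s hs s' hs'
  · intro z hz s' _ hs'
    obtain ⟨s, hs, rfl, e1⟩ := hJ z hz
    beta_reduce
    rw [e1]
    exact hcN s (hSn s hs).1 _ (by omega)
  · intro s hs s' hs1 hs'
    cases s with
    | zero =>
      rw [hql0]
      intro he
      have := hNi _ (by omega) _ (by omega) he
      omega
    | succ s =>
      rw [hqls]
      exact hQN _ (by omega) (by omega) _ (by omega)
  · intro z hz q hq hsub
    obtain ⟨s, hs, rfl, e1⟩ := hJ z hz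
    rw [hC'D] at hsub ⊢
    have hqc : q = c s := by
      by_contra hne
      obtain ⟨x, hx⟩ := hDne s hs
      exact Set.disjoint_left.1 (hA.2 q hq (c s) (hc s (hSn s hs).1).1 hne) (hsub hx) (hDA s hs hx)
    rw [hqc]
    exact hDsz s hs

lemma lev_path (G : SimpleGraph V) (L : ℕ → Set V) (z : V) (hz : L 0 = {z}) (m : ℕ) :
    (∀ i < m, Covers G (L i) (L (i + 1))) → ∀ r ∈ L m, ∃ p : ℕ → V, p 0 = z ∧ p m = r ∧
      (∀ i ≤ m, p i ∈ L i) ∧ ∀ i < m, G.Adj (p i) (p (i + 1)) := by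
  induction m with
  | zero =>
    intro _ r hr
    have : r = z := by rw [hz] at hr; exact hr
    refine ⟨fun _ => r, this, rfl, fun i hi => ?_, fun i hi => absurd hi (by omega)⟩
    have : i = 0 := by omega
    rw [this]; exact hr
  | succ m ih =>
    intro h r hr
    obtain ⟨y, hy, hadj⟩ := h m (by omega) r hr
    obtain ⟨p, p0, pm, pL, pa⟩ := ih (fun i hi => h i (by omega)) y hy
    refine ⟨fun i => if i ≤ m then p i else r, by simp [p0], by simp, fun i hi => ?_,
      fun i hi => ?_⟩
    · by_cases him : i ≤ m
      · simp only [him, if_true]; exact pL i him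
      · have : i = m + 1 := by omega
        subst this
        simpa using hr
    · by_cases him : i < m
      · have h1 : i ≤ m := by omega
        have h2 : i + 1 ≤ m := by omega
        simp only [h1, h2, if_true]; exact pa i him
      · have : i = m := by omega
        subst this
        simpa [pm] using hadj

set_option maxHeartbeats 4000000 in
/-- Combination of all the steps, with the numerical facts as hypotheses. -/
lemma core [Finite V] (G : SimpleGraph V) (I : Finset ℤ) (A : ℤ → Set V) (hA : IsBlockade I A)
    (k ρ n K : ℕ) (hk : 1 ≤ k) (hρ : 2 ≤ ρ) (hn : k * ρ ^ 3 ≤ n) (hlen : I.card = K)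
    (hKn : n + 3 * ρ ≤ K) (γ lam δ τ' p μ : ℝ) (hγ0 : 0 < γ) (hlam0 : 0 < lam)
    (hδ0 : 0 < δ) (hτ' : 4 ≤ τ') (hp0 : 0 < p) (hμ : 0 < μ)
    (hKδ : K * δ ≤ 3 / 1024) (hγ : γ ≤ 3 / 4096) (hlam : lam ≤ 1 / 32768)
    (hδτ : 2 * δ * (τ' + 2) ≤ 1 / 100) (hnp : n * (p + lam) ≤ 17 / 1024)
    (hfin : ρ ^ 3 * μ + ρ * lam + γ ≤ p)
    (hpow : ∀ i ∈ I, ((A i).ncard : ℝ) ≤ τ' ^ (ρ - 1))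
    (hlink : LinkageLE G I A lam) (hdiv : ¬ Divergent G I A γ δ) :
    ∃ (L : ℕ → Set V) (a : ℕ) (M : ℕ → Set V) (b : ℕ) (J : Finset ℤ) (C : ℤ → Set V),
      IsBiLevelling G L a M b J C ∧ RainbowBiLevelling I A L a M b J C ∧
      J.card = k ∧ a + b ≤ 3 * ρ - 3 ∧ SizeGE I A J C μ := by
  classical
  obtain ⟨a, haa⟩ : ∃ a : ℤ → ℝ, a = fun i => ((A i).ncard : ℝ) := ⟨_, rfl⟩
  have hai : ∀ i, a i = ((A i).ncard : ℝ) := fun i => by rw [haa]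
  have ha : ∀ i ∈ I, 0 < a i := by
    intro i hi
    rw [hai]
    exact_mod_cast (Set.ncard_pos (Set.toFinite _)).2 (hA.1 i hi)
  have hnd : ∀ i ∈ I, ∀ j ∈ I, i ≠ j → ∀ X ⊆ A i, ∀ Y ⊆ A j, δ * a i ≤ (X.ncard : ℝ) →
      Disjoint Y (nbhd G X) → (Y.ncard : ℝ) < γ * a j := by
    intro i hi j hj hij X hX Y hY hs hd
    by_contra hcon
    push Not at hcon
    rw [hai] at hs hcon
    refine hdiv ⟨j, hj, i, hi, hij.symm, Y, hY, X, hX, hcon, hs, fun y hy x hx hadj => ?_⟩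
    exact Set.disjoint_left.1 hd hy ⟨x, hx, hadj.symm⟩
  have hdeg : ∀ i ∈ I, ∀ j ∈ I, i ≠ j → ∀ v ∈ A i, ∀ D ⊆ A j,
      ((nbhd G {v} ∩ D).ncard : ℝ) ≤ lam * a j := by
    intro i hi j hj hij v hv D hD
    rw [hai]
    refine (ncard_le_real ?_).trans (hlink i hi j hj hij v hv)
    rintro x ⟨⟨y, rfl, hadj⟩, hx⟩
    exact ⟨hadj, hD hx⟩
  have hKδ' : δ ≤ 3 / 1024 := by
    have : (1 : ℝ) ≤ K := by exact_mod_cast (by omega : 1 ≤ K)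
    nlinarith
  have hcardF : ∀ F ⊆ I, (F.card : ℝ) * δ ≤ 3 / 1024 := by
    intro F hF
    refine le_trans ?_ hKδ
    have : (F.card : ℝ) ≤ K := by exact_mod_cast hlen ▸ Finset.card_le_card hF
    nlinarith
  -- first cleaning
  obtain ⟨B, hBA, hBs, hBE⟩ := clean G I a ha A A γ δ (τ' + 2) (3 / 16) 1 hδ0.le (by linarith)
    hnd (fun i _ => subset_rfl) (fun i _ => by rw [hai, one_mul])
    (by have := hcardF I subset_rfl; linarith) (by have := hcardF I subset_rfl; linarith)
  have hBs' : ∀ i ∈ I, (1 - 3 / 1024) * a i ≤ ((B i).ncard : ℝ) := by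
    intro i hi
    refine le_trans ?_ (hBs i hi)
    have := hcardF I subset_rfl
    have := ha i hi
    nlinarith
  have hIne : I.Nonempty := Finset.card_pos.1 (by omega)
  obtain ⟨i0, hi0⟩ := hIne
  obtain ⟨w, hw⟩ : (B i0).Nonempty := by
    rw [Set.nonempty_iff_ne_empty]
    intro he
    have h1 := hBs' i0 hi0
    rw [he, Set.ncard_empty] at h1
    have := ha i0 hi0
    norm_num at h1
    nlinarith
  -- first levelling
  obtain ⟨Q, q, m, hm1, hm, hQ, hQ0, hq0, hQs, hQlow⟩ := lev G I a ha B (τ' + 2) τ' (3 / 16)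
    (1 / 16) lam ρ hρ hBE hτ' le_rfl hlam0.le (by linarith) (by norm_num) (by norm_num)
    (fun i hi j hj hij v hv => hdeg i hi j hj hij v (hBA i hv) _ (hBA j)) (by omega) i0 hi0 w hw
    (by rw [hai]; exact hpow i0 hi0)
  obtain ⟨hQ1, hQ2, hQ3, hQ4⟩ := hQ
  obtain ⟨U1, hU1⟩ : ∃ U : Finset ℤ, U = I \ (Finset.range (m + 1)).image q := ⟨_, rfl⟩
  have hU1I : U1 ⊆ I := by rw [hU1]; exact Finset.sdiff_subset
  have hU1q : ∀ j ∈ U1, ∀ i ≤ m, j ≠ q i := by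
    intro j hj i hi he
    rw [hU1, Finset.mem_sdiff] at hj
    exact hj.2 (Finset.mem_image.2 ⟨i, Finset.mem_range.2 (by omega), he.symm⟩)
  have hU1c : K - ρ ≤ U1.card := by
    rw [hU1]
    have h1 := Finset.le_card_sdiff ((Finset.range (m + 1)).image q) I
    have h2 : ((Finset.range (m + 1)).image q).card ≤ m + 1 := by
      simpa using Finset.card_image_le (s := Finset.range (m + 1)) (f := q)
    omega
  have hqm := hQ1 m le_rfl
  have hQmA : Q m ⊆ A (q m) := hqm.2.trans (hBA _)
  have hQmδ : δ * a (q m) ≤ ((Q m).ncard : ℝ) := by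
    refine le_trans ?_ hQs
    have := ha _ hqm.1
    nlinarith
  -- grading
  obtain ⟨D, hD⟩ : ∃ D : ℤ → Set V, D = fun j => B j \ low G Q m := ⟨_, rfl⟩
  have hDB : ∀ j, D j ⊆ B j := fun j => by rw [hD]; exact Set.diff_subset
  have hDlow : ∀ j, ∀ x ∈ D j, x ∉ low G Q m := fun j x hx => by rw [hD] at hx; exact hx.2
  have hDs : ∀ j ∈ U1, (1 - 3 / 1024 - 3 / 16 - 1 / 32768) * a j ≤ ((D j).ncard : ℝ) := by
    intro j hj
    have h1 := hQlow j (hU1I hj) (fun i hi => hU1q j hj i hi)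
    have h2 := ncard_split_real (B j) (low G Q m)
    have h3 := hBs' j (hU1I hj)
    have h4 := ha j (hU1I hj)
    have h5 : D j = B j \ low G Q m := by rw [hD]
    rw [h5]
    nlinarith
  obtain ⟨Y, c, C, S, hSQ, hYS, hYm, hcU, hci, hCD, hCY, hCYd, hCs, hSlow⟩ :=
    grade G a (Q m) p lam hp0.le hlam0.le n U1 D (by omega) (fun i hi => (ha i (hU1I hi)).le)
      (fun v hv i hi => hdeg (q m) hqm.1 i (hU1I hi) (hU1q i hi m le_rfl).symm v (hQmA hv) _
        ((hDB i).trans (hBA i)))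
      (by
        intro j hj
        have h1 := hDs j hj
        have h2 := ncard_split_real (D j) (nbhd G (Q m))
        have h3 := hnd (q m) hqm.1 j (hU1I hj) (hU1q j hj m le_rfl).symm (Q m) hQmA
          (D j \ nbhd G (Q m)) (Set.diff_subset.trans ((hDB j).trans (hBA j))) hQmδ
          Set.disjoint_sdiff_left
        have h4 := ha j (hU1I hj)
        nlinarith)
  -- second levelling
  obtain ⟨U2, hU2⟩ : ∃ U : Finset ℤ, U = U1 \ (Finset.range n).image c := ⟨_, rfl⟩
  have hU2U : U2 ⊆ U1 := by rw [hU2]; exact Finset.sdiff_subset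
  have hU2c : ∀ j ∈ U2, ∀ s < n, j ≠ c s := by
    intro j hj s hs he
    rw [hU2, Finset.mem_sdiff] at hj
    exact hj.2 (Finset.mem_image.2 ⟨s, Finset.mem_range.2 hs, he.symm⟩)
  have hU2card : 2 * ρ ≤ U2.card := by
    rw [hU2]
    have h1 := Finset.le_card_sdiff ((Finset.range n).image c) U1
    have h2 : ((Finset.range n).image c).card ≤ n := by
      simpa using Finset.card_image_le (s := Finset.range n) (f := c)
    omega
  have hF2 : insert i0 U2 ⊆ I := by
    intro x hx
    rcases Finset.mem_insert.1 hx with rfl | hx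
    · exact hi0
    · exact hU1I (hU2U hx)
  obtain ⟨Q', q', m', hm1', hm', hQ', hQ0', hq0', hQs', hQlow'⟩ := lev G (insert i0 U2) a
    (fun i hi => ha i (hF2 hi)) B (τ' + 2) τ' (3 / 16) (1 / 16) lam ρ hρ
    (fun i hi j hj => hBE i (hF2 hi) j (hF2 hj)) hτ' le_rfl hlam0.le (by linarith) (by norm_num)
    (by norm_num)
    (fun i hi j hj hij v hv => hdeg i (hF2 hi) j (hF2 hj) hij v (hBA i hv) _ (hBA j))
    (by have := Finset.card_le_card (Finset.subset_insert i0 U2); omega) i0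
    (Finset.mem_insert_self _ _) w hw (by rw [hai]; exact hpow i0 hi0)
  obtain ⟨hQ1', hQ2', hQ3', hQ4'⟩ := hQ'
  have hq'U : ∀ i, 1 ≤ i → i ≤ m' → q' i ∈ U2 := by
    intro i h1 hi
    rcases Finset.mem_insert.1 (hQ1' i hi).1 with h | h
    · rw [← hq0'] at h
      have := hQ2' i hi 0 (by omega) h
      omega
    · exact h
  -- third levelling
  obtain ⟨U3, hU3⟩ : ∃ U : Finset ℤ, U = U2 \ (Finset.range (m' + 1)).image q' := ⟨_, rfl⟩
  have hU3U : U3 ⊆ U2 := by rw [hU3]; exact Finset.sdiff_subset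
  have hU3q : ∀ j ∈ U3, ∀ i ≤ m', j ≠ q' i := by
    intro j hj i hi he
    rw [hU3, Finset.mem_sdiff] at hj
    exact hj.2 (Finset.mem_image.2 ⟨i, Finset.mem_range.2 (by omega), he.symm⟩)
  have hU3c : ρ ≤ U3.card := by
    rw [hU3]
    have h1 := Finset.le_card_sdiff ((Finset.range (m' + 1)).image q') U2
    have h2 : ((Finset.range (m' + 1)).image q').card ≤ m' + 1 := by
      simpa using Finset.card_image_le (s := Finset.range (m' + 1)) (f := q')
    omega
  have hF3 : insert (q' m') U3 ⊆ I := by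
    intro x hx
    rcases Finset.mem_insert.1 hx with rfl | hx
    · exact hF2 (hQ1' m' le_rfl).1
    · exact hU1I (hU2U (hU3U hx))
  have hqU3 : q' m' ∉ U3 := fun h => hU3q _ h m' le_rfl rfl
  obtain ⟨B'', hB''⟩ : ∃ B'' : ℤ → Set V, B'' = fun j => if j = q' m' then Q' m' else
    B j \ (low G Q m ∪ nbhd G S ∪ low G Q' m') := ⟨_, rfl⟩
  have hB''q : B'' (q' m') = Q' m' := by simp [hB'']
  have hB''U : ∀ j, j ≠ q' m' → B'' j = B j \ (low G Q m ∪ nbhd G S ∪ low G Q' m') := by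
    intro j hj
    simp [hB'', hj]
  have hB''B : ∀ j, B'' j ⊆ B j := by
    intro j
    by_cases hj : j = q' m'
    · rw [hj, hB''q]; exact (hQ1' m' le_rfl).2
    · rw [hB''U j hj]; exact Set.diff_subset
  have hB''s : ∀ j ∈ insert (q' m') U3, 1 / 16 * a j ≤ ((B'' j).ncard : ℝ) := by
    intro j hj
    rcases Finset.mem_insert.1 hj with rfl | hj
    · rw [hB''q]; exact hQs'
    · have hj2 := hU3U hj
      have hj1 := hU2U hj2
      have hjI := hU1I hj1
      rw [hB''U j (fun h => hU3q j hj m' le_rfl h)]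
      have h1 : D j = B j \ low G Q m := by rw [hD]
      have h2 : B j \ (low G Q m ∪ nbhd G S ∪ low G Q' m') =
        (D j \ nbhd G S) \ low G Q' m' := by
        rw [h1, Set.diff_diff, Set.diff_diff, Set.union_assoc]
      rw [h2]
      have h3 := hDs j hj1
      have h4 := ncard_split_real (D j) (nbhd G S)
      have h5 := hSlow j hj1 (fun s hs => hU2c j hj2 s hs)
      have h6 := ncard_split_real (D j \ nbhd G S) (low G Q' m')
      have h7 := hQlow' j (Finset.mem_insert_of_mem hj2) (fun i hi => hU3q j hj i hi)
      have h8 : ((low G Q' m' ∩ (D j \ nbhd G S)).ncard : ℝ) ≤ ((low G Q' m' ∩ B j).ncard : ℝ) :=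
        ncard_le_real (Set.inter_subset_inter_right _ (Set.diff_subset.trans (hDB j)))
      have h9 := ha j hjI
      nlinarith
  obtain ⟨B3, hB3B, hB3s, hB3E⟩ := clean G (insert (q' m') U3) a (fun i hi => ha i (hF3 hi)) A B''
    γ δ (τ' + 2) (3 / 64) (1 / 16) hδ0.le (by linarith)
    (fun i hi j hj => hnd i (hF3 hi) j (hF3 hj)) (fun i _ => (hB''B i).trans (hBA i)) hB''s
    (by have := hcardF _ hF3; linarith) (by have := hcardF _ hF3; linarith)
  have hqF3 : q' m' ∈ insert (q' m') U3 := Finset.mem_insert_self _ _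
  obtain ⟨r, hr⟩ : (B3 (q' m')).Nonempty := by
    rw [Set.nonempty_iff_ne_empty]
    intro he
    have h1 := hB3s _ hqF3
    rw [he, Set.ncard_empty] at h1
    have := ha _ (hF3 hqF3)
    have := hcardF _ hF3
    norm_num at h1
    nlinarith
  have hB3A : ∀ j, B3 j ⊆ A j := fun j => (hB3B j).trans ((hB''B j).trans (hBA j))
  obtain ⟨T, qt, h, hh1, hh, hT, hT0, hqt0, hTs, -⟩ := lev G (insert (q' m') U3) a
    (fun i hi => ha i (hF3 hi)) B3 (τ' + 2) τ' (3 / 64) (1 / 64) lam ρ hρ hB3E hτ' le_rfl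
    hlam0.le (by linarith) (by norm_num) (by norm_num)
    (fun i hi j hj hij v hv => hdeg i (hF3 hi) j (hF3 hj) hij v (hB3A i hv) _ (hB3A j))
    (by have := Finset.card_le_card (Finset.subset_insert (q' m') U3); omega) (q' m') hqF3 r hr
    (by rw [hai]; exact hpow _ (hF3 hqF3))
  obtain ⟨hT1, hT2, hT3, hT4⟩ := hT
  have hqtU : ∀ i, 1 ≤ i → i ≤ h → qt i ∈ U3 := by
    intro i h1 hi
    rcases Finset.mem_insert.1 (hT1 i hi).1 with h' | h'
    · rw [← hqt0] at h'
      have := hT2 i hi 0 (by omega) h'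
      omega
    · exact h'
  have hTav : ∀ i, 1 ≤ i → i ≤ h → ∀ x ∈ T i,
      x ∉ low G Q m ∧ x ∉ nbhd G S ∧ x ∉ low G Q' m' := by
    intro i h1 hi x hx
    have h2 := hB3B _ ((hT1 i hi).2 hx)
    rw [hB''U _ (fun he => hqU3 (he ▸ hqtU i h1 hi))] at h2
    have h3 := h2.2
    simp only [Set.mem_union, not_or] at h3
    exact ⟨h3.1.1, h3.1.2, h3.2⟩
  have hrQ : r ∈ Q' m' := by
    have := hB3B _ hr
    rwa [hB''q] at this
  obtain ⟨P, hP0, hPm, hPQ, hPadj⟩ := lev_path G Q' w hQ0' m' hQ3' r hrQ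
  have hcI : ∀ s < n, c s ∈ I := fun s hs => hU1I (hcU s hs)
  have hCA : ∀ s < n, C s ⊆ A (c s) := fun s hs => (hCD s hs).trans ((hDB _).trans (hBA _))
  have hcq' : ∀ s < n, ∀ i ≤ m', c s ≠ q' i := by
    intro s hs i hi he
    by_cases hi1 : 1 ≤ i
    · exact hU2c _ (hq'U i hi1 hi) s hs he.symm
    · have : i = 0 := by omega
      rw [this, hq0', ← hq0] at he
      exact hU1q _ (hcU s hs) 0 (by omega) he
  -- new C
  obtain ⟨C', hC'⟩ : ∃ C' : ℕ → Set V, C' = fun s =>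
    nbhd G (T h) ∩ (C s \ nbhd G (P '' (Finset.range (m' + 1) : Set ℕ))) := ⟨_, rfl⟩
  have hC's : ∀ s < n, (ρ : ℝ) ^ 3 * μ * ((A (c s)).ncard : ℝ) ≤ ((C' s).ncard : ℝ) := by
    intro s hs
    have hcs := hcU s hs
    rw [← hai]
    have h0 : C' s = nbhd G (T h) ∩ (C s \ nbhd G (P '' (Finset.range (m' + 1) : Set ℕ))) := by
      rw [hC']
    rw [h0]
    have h1 := hCs s hs
    have h2 := ncard_split_real (C s) (nbhd G (P '' (Finset.range (m' + 1) : Set ℕ)))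
    have h3 := ncard_split_real (C s \ nbhd G (P '' (Finset.range (m' + 1) : Set ℕ)))
      (nbhd G (T h))
    have hth := hF3 (hT1 h le_rfl).1
    have h4 := hnd (qt h) hth (c s) (hcI s hs)
      (fun he => hU2c _ (hU3U (hqtU h hh1 le_rfl)) s hs he) (T h)
      ((hT1 h le_rfl).2.trans (hB3A _))
      ((C s \ nbhd G (P '' (Finset.range (m' + 1) : Set ℕ))) \ nbhd G (T h))
      (Set.diff_subset.trans (Set.diff_subset.trans (hCA s hs)))
      (by
        refine le_trans ?_ hTs
        have := ha _ hth
        nlinarith) Set.disjoint_sdiff_left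
    have h5 : ∀ l ≤ m' + 1, ((nbhd G (P '' (Finset.range l : Set ℕ)) ∩ C s).ncard : ℝ) ≤
        l * (lam * a (c s)) := by
      intro l
      induction l with
      | zero =>
        intro _
        simp [nbhd_empty]
      | succ l ih =>
        intro hl
        have e1 : P '' (Finset.range (l + 1) : Set ℕ) =
            P '' (Finset.range l : Set ℕ) ∪ {P l} := by
          rw [Finset.range_add_one, Finset.coe_insert, Set.image_insert_eq, Set.insert_eq,
            Set.union_comm]
        rw [e1, nbhd_union, Set.union_inter_distrib_right]
        have e2 := ncard_union_real (nbhd G (P '' (Finset.range l : Set ℕ)) ∩ C s)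
          (nbhd G {P l} ∩ C s)
        have e3 := hQ1' l (by omega)
        have e4 := hdeg (q' l) (hF2 e3.1) (c s) (hcI s hs) (hcq' s hs l (by omega)).symm (P l)
          (hBA _ (e3.2 (hPQ l (by omega)))) (C s) (hCA s hs)
        have e5 := ih (by omega)
        rw [Nat.cast_add, Nat.cast_one]
        linarith
    have h6 := h5 (m' + 1) le_rfl
    have h7 : ((m' + 1 : ℕ) : ℝ) ≤ ρ := by exact_mod_cast (by omega : m' + 1 ≤ ρ)
    have h8 := ha _ (hcI s hs)
    have h9 : ((m' + 1 : ℕ) : ℝ) * (lam * a (c s)) ≤ ρ * (lam * a (c s)) :=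
      mul_le_mul_of_nonneg_right h7 (by positivity)
    have h10 := mul_le_mul_of_nonneg_right hfin h8.le
    nlinarith
  have hC'C : ∀ s, C' s ⊆ C s := by
    intro s x hx
    rw [hC'] at hx
    exact hx.2.1
  have hC'T : ∀ s, C' s ⊆ nbhd G (T h) := by
    intro s x hx
    rw [hC'] at hx
    exact hx.1
  have hC'P : ∀ s, ∀ x ∈ C' s, ∀ i ≤ m', ¬ G.Adj (P i) x := by
    intro s x hx i hi hadj
    rw [hC'] at hx
    refine hx.2.2 ⟨P i, ⟨i, ?_, rfl⟩, hadj⟩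
    simp
    omega
  -- assembling
  obtain ⟨R, hR⟩ : ∃ R : ℕ → Set V, R = fun l => if l = 0 then ∅ else if l = m then S else Q l :=
    ⟨_, rfl⟩
  have hR0 : R 0 = ∅ := by simp [hR]
  have hRm : R m = S := by
    have : m ≠ 0 := by omega
    simp [hR, this]
  have hRl : ∀ l, 1 ≤ l → l < m → R l = Q l := by
    intro l h1 h2
    have e1 : l ≠ 0 := by omega
    have e2 : l ≠ m := by omega
    simp [hR, e1, e2]
  have hRQ : ∀ l, 1 ≤ l → l ≤ m → R l ⊆ Q l := by
    intro l h1 h2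
    rcases h2.lt_or_eq with h3 | rfl
    · rw [hRl l h1 h3]
    · rw [hRm]; exact hSQ
  obtain ⟨N, hN⟩ : ∃ N : ℕ → Set V, N = fun i => if i ≤ m' then {P i} else T (i - m') := ⟨_, rfl⟩
  obtain ⟨qN, hqN⟩ : ∃ qN : ℕ → ℤ, qN = fun i => if i ≤ m' then q' i else qt (i - m') := ⟨_, rfl⟩
  have hNP : ∀ i ≤ m', N i = {P i} := fun i hi => by simp [hN, hi]
  have hNT : ∀ t, N (m' + t) = T t := by
    intro t
    by_cases ht : t = 0
    · rw [ht, Nat.add_zero, hNP m' le_rfl, hPm, hT0]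
    · simp [hN, ht]
  have hqNP : ∀ i ≤ m', qN i = q' i := fun i hi => by simp [hqN, hi]
  have hqNT : ∀ t, qN (m' + t) = qt t := by
    intro t
    by_cases ht : t = 0
    · rw [ht, Nat.add_zero, hqNP m' le_rfl, hqt0]
    · simp [hqN, ht]
  have hsplit : ∀ i, i ≤ m' ∨ ∃ t, 1 ≤ t ∧ i = m' + t := by
    intro i
    by_cases hi : i ≤ m'
    · exact Or.inl hi
    · exact Or.inr ⟨i - m', by omega, by omega⟩
  have hqq' : ∀ l, 1 ≤ l → l ≤ m → ∀ j ∈ U2, q l ≠ j :=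
    fun l _ hl j hj he => hU1q j (hU2U hj) l hl he.symm
  have hqq0 : ∀ l, 1 ≤ l → l ≤ m → q l ≠ i0 := by
    intro l h1 hl he
    rw [← hq0] at he
    have := hQ2 l hl 0 (by omega) he
    omega
  obtain ⟨L, x, M, y, J, C2, h1, h2, h3, h4, h5⟩ := assemble G I A hA k ρ n hk hρ hn μ hμ m m' h
    hm1 hm hm' hh R q hR0
    (fun l h1 h2 => ⟨(hQ1 l h2).1, (hRQ l h1 h2).trans ((hQ1 l h2).2.trans (hBA _))⟩)
    (fun l _ h2 l' _ h4 he => hQ2 l h2 l' h4 he)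
    (fun l h1 h2 b hb => by
      rw [hRl l h1 h2]
      exact hQ3 l h2 b (hRQ (l + 1) (by omega) (by omega) hb))
    (fun l l' h1 h2 h3 u hu v hv => hQ4 l l' h2 h3 u (hRQ l h1 (by omega) hu) v
      (hRQ l' (by omega) h3 hv))
    P
    (fun u hu => by
      obtain ⟨z, hz, hadj⟩ := hQ3 0 (by omega) u (hRQ 1 le_rfl hm1 hu)
      rw [hQ0] at hz
      rw [hP0, ← Set.mem_singleton_iff.1 hz]
      exact hadj)
    N qN
    (by
      intro i hi
      rcases hsplit i with h' | ⟨t, ht, rfl⟩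
      · rw [hNP i h', hqNP i h']
        have e := hQ1' i h'
        exact ⟨hF2 e.1, Set.singleton_subset_iff.2 (hBA _ (e.2 (hPQ i h')))⟩
      · rw [hNT, hqNT]
        have e := hT1 t (by omega)
        exact ⟨hF3 e.1, e.2.trans (hB3A _)⟩)
    (by
      intro i hi j hj he
      rcases hsplit i with h' | ⟨t, ht, rfl⟩
      · rcases hsplit j with h'' | ⟨t', ht', rfl⟩
        · rw [hqNP i h', hqNP j h''] at he
          exact hQ2' i h' j h'' he
        · rw [hqNP i h', hqNT] at he
          exact absurd he.symm (hU3q _ (hqtU t' ht' (by omega)) i h')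
      · rcases hsplit j with h'' | ⟨t', ht', rfl⟩
        · rw [hqNP j h'', hqNT] at he
          exact absurd he (hU3q _ (hqtU t ht (by omega)) j h'')
        · rw [hqNT, hqNT] at he
          rw [hT2 t (by omega) t' (by omega) he])
    hNP
    (by
      intro i hi
      by_cases h' : i < m'
      · rw [hNP i h'.le, hNP (i + 1) h']
        intro b hb
        rw [Set.mem_singleton_iff.1 hb]
        exact ⟨P i, rfl, hPadj i h'⟩
      · obtain ⟨t, rfl⟩ : ∃ t, i = m' + t := ⟨i - m', by omega⟩
        rw [Nat.add_assoc, hNT, hNT]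
        exact hT3 t (by omega))
    (by
      intro i j hij hj
      rcases hsplit j with h'' | ⟨t', ht', rfl⟩
      · rw [hNP i (by omega), hNP j h'']
        intro u hu v hv
        rw [Set.mem_singleton_iff.1 hu, Set.mem_singleton_iff.1 hv]
        exact hQ4' i j hij h'' _ (hPQ i (by omega)) _ (hPQ j h'')
      · rw [hNT]
        by_cases hi : i < m'
        · rw [hNP i hi.le]
          intro u hu v hv hadj
          rw [Set.mem_singleton_iff.1 hu] at hadj
          exact (hTav t' ht' (by omega) v hv).2.2 ⟨i, hi, P i, hPQ i hi.le, hadj⟩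
        · obtain ⟨t, rfl⟩ : ∃ t, i = m' + t := ⟨i - m', by omega⟩
          rw [hNT]
          exact hT4 t t' (by omega) (by omega))
    (by
      intro l hl1 hl i hi
      rcases hsplit i with h' | ⟨t, ht, rfl⟩
      · rw [hqNP i h']
        rcases Finset.mem_insert.1 (hQ1' i h').1 with e | e
        · rw [e]; exact hqq0 l hl1 hl
        · exact hqq' l hl1 hl _ e
      · rw [hqNT]
        exact hqq' l hl1 hl _ (hU3U (hqtU t ht (by omega))))
    (by
      intro i hi hi2 l hl1 hl u hu v hv hadj
      obtain ⟨t, rfl⟩ : ∃ t, i = m' + t := ⟨i - m', by omega⟩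
      rw [hNT] at hu
      have e := hTav t (by omega) (by omega) u hu
      rcases hl.lt_or_eq with h' | rfl
      · rw [hRl l hl1 h'] at hv
        exact e.1 ⟨l, h', v, hv, hadj.symm⟩
      · rw [hRm] at hv
        exact e.2.1 ⟨v, hv, hadj.symm⟩)
    Y c C'
    (fun s hs => ⟨hcI s hs, (hC'C s).trans (hCA s hs)⟩) hci
    (fun s hs l _ hl => hU1q _ (hcU s hs) l hl)
    (by
      intro s hs i hi
      rcases hsplit i with h' | ⟨t, ht, rfl⟩
      · rw [hqNP i h']
        exact hcq' s hs i h'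
      · rw [hqNT]
        exact (hU2c _ (hU3U (hqtU t ht (by omega))) s hs).symm)
    (fun s hs => (hC'C s).trans (hCY s hs))
    (fun s hs => by rw [hRm]; exact hYS s hs)
    hYm
    (fun s hs s' hs' => (hCYd s hs s' hs').mono_left (hC'C s))
    (by
      intro s hs l hl1 hl u hu v hv hadj
      rw [hRl l hl1 hl] at hu
      exact hDlow _ v (hCD s hs (hC'C s hv)) ⟨l, hl, u, hu, hadj⟩)
    (fun s _ i hi x hx => hC'P s x hx i hi)
    (fun s _ x hx => ⟨h, hh1, le_rfl, by rw [hNT]; exact hC'T s hx⟩)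
    hC's
  exact ⟨L, x, M, y, J, C2, h1, h2, h3, by omega, h5⟩

/-- obtaining an `A`-rainbow bi-levelling of length `k` and height at
most `3ρ - 3` from a long blockade with small linkage that is not divergent. -/
theorem statement_12 {V : Type} [Fintype V] (G : SimpleGraph V)
    (k ρ : ℕ) (hk : 1 ≤ k) (hρ : 2 ≤ ρ) (K : ℕ) (hK : K = k * ρ ^ 4)
    (γ lam : ℝ) (hγ0 : 0 < γ) (hlam0 : 0 < lam)
    (hlam : lam ≤ 1 / (512 * (ρ : ℝ) ^ 2 * (K : ℝ)))
    (hγ : γ ≤ 3 / (256 * (K : ℝ)))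
    (δ : ℝ) (hδ0 : 0 < δ) (hδ : δ ≤ 3 * (ρ : ℝ) / (128 * (K : ℝ) ^ 2))
    (hδG : (256 * (K : ℝ) * δ / 3) ^ (ρ - 1) * (Fintype.card V : ℝ) ≤ 1)
    (I : Finset ℤ) (A : ℤ → Set V) (hA : IsBlockade I A) (hlen : I.card = K)
    (hlink : LinkageLE G I A lam) (hdiv : ¬ Divergent G I A γ δ) :
    ∃ (L : ℕ → Set V) (a : ℕ) (M : ℕ → Set V) (b : ℕ) (J : Finset ℤ) (C : ℤ → Set V),
      IsBiLevelling G L a M b J C ∧ RainbowBiLevelling I A L a M b J C ∧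
      J.card = k ∧ a + b ≤ 3 * ρ - 3 ∧
      SizeGE I A J C (1 / (64 * (ρ : ℝ) ^ 3 * (K : ℝ))) := by
  have hr2 : (2 : ℝ) ≤ ρ := by exact_mod_cast hρ
  have hk1 : (1 : ℝ) ≤ k := by exact_mod_cast hk
  have hr3 : (8 : ℝ) ≤ (ρ : ℝ) ^ 3 := by
    have := pow_le_pow_left₀ (by norm_num) hr2 3
    linarith
  have hn8 : (8 : ℝ) ≤ k * (ρ : ℝ) ^ 3 := by nlinarith
  have hKr : (K : ℝ) = k * (ρ : ℝ) ^ 3 * ρ := by rw [hK]; push_cast; ring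
  have hK16 : (16 : ℝ) ≤ K := by rw [hKr]; nlinarith
  have hKr8 : 8 * (ρ : ℝ) ≤ K := by rw [hKr]; nlinarith
  have hK0 : (0 : ℝ) < K := by linarith
  have hr0 : (0 : ℝ) < ρ := by linarith
  have hr4 : (4 : ℝ) ≤ (ρ : ℝ) ^ 2 := by nlinarith
  have hlamK : lam * (512 * (ρ : ℝ) ^ 2 * K) ≤ 1 := by
    rwa [le_div_iff₀ (by positivity)] at hlam
  have hγK : γ * (256 * K) ≤ 3 := by rwa [le_div_iff₀ (by positivity)] at hγ
  have hδK : δ * (128 * (K : ℝ) ^ 2) ≤ 3 * ρ := by rwa [le_div_iff₀ (by positivity)] at hδ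
  have hKδ : (K : ℝ) * δ ≤ 3 / 1024 := by
    have h1 : (K * δ * 128) * K ≤ (3 / 8) * K := by nlinarith
    have := le_of_mul_le_mul_right h1 hK0
    linarith
  have hδ' : δ ≤ 1 / 1000 := by nlinarith
  have hKδ0 : 0 < (K : ℝ) * δ := by positivity
  have hτδ : 3 / (256 * (K * δ)) * δ = 3 / (256 * K) := by
    field_simp
  have h256 : 3 / (256 * (K : ℝ)) ≤ 3 / 4096 := by
    rw [div_le_div_iff₀ (by positivity) (by norm_num)]; linarith
  have hlam1 : lam * (ρ : ℝ) ^ 2 * K ≤ 1 / 512 := by linarith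
  have hKpow : k * ρ ^ 3 + 3 * ρ ≤ K := by
    rw [hK]
    have h1 : 4 ≤ ρ ^ 2 := by nlinarith
    have h2 : 4 * ρ ≤ ρ ^ 3 := by
      have : ρ ^ 3 = ρ ^ 2 * ρ := by ring
      rw [this]; exact Nat.mul_le_mul_right _ h1
    have h3 : ρ ^ 3 ≤ k * ρ ^ 3 := Nat.le_mul_of_pos_left _ hk
    have h4 : k * ρ ^ 4 = k * ρ ^ 3 * ρ := by ring
    rw [h4]
    have h5 : k * ρ ^ 3 * 2 ≤ k * ρ ^ 3 * ρ := Nat.mul_le_mul_left _ hρ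
    omega
  have hτ4 : 4 ≤ 3 / (256 * ((K : ℝ) * δ)) := by
    rw [le_div_iff₀ (by positivity)]; linarith
  refine core G I A hA k ρ (k * ρ ^ 3) K hk hρ le_rfl hlen hKpow γ lam δ
    (3 / (256 * (K * δ))) (1 / (32 * K)) (1 / (64 * (ρ : ℝ) ^ 3 * (K : ℝ))) hγ0 hlam0 hδ0 hτ4
    (by positivity) (by positivity) hKδ (hγ.trans h256) ?_ ?_ ?_ ?_ ?_ hlink hdiv
  · have h1 : (64 : ℝ) ≤ (ρ : ℝ) ^ 2 * K := by nlinarith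
    have h2 : lam * 64 ≤ lam * ((ρ : ℝ) ^ 2 * K) := mul_le_mul_of_nonneg_left h1 hlam0.le
    have h3 : lam * ((ρ : ℝ) ^ 2 * K) ≤ 1 / 512 := by linarith
    linarith
  · have : 2 * δ * (3 / (256 * (K * δ)) + 2) = 2 * (3 / (256 * K)) + 4 * δ := by
      rw [← hτδ]; ring
    rw [this]
    linarith
  · have h0 : ((k * ρ ^ 3 : ℕ) : ℝ) = k * (ρ : ℝ) ^ 3 := by push_cast; ring
    rw [h0]
    have h1 : (k : ℝ) * (ρ : ℝ) ^ 3 * (1 / (32 * K)) ≤ 1 / 64 := by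
      rw [mul_one_div, div_le_div_iff₀ (by positivity) (by norm_num)]
      rw [hKr]
      nlinarith
    have h2 : (k : ℝ) * (ρ : ℝ) ^ 3 * lam ≤ 1 / 1024 := by
      have h3 : (k : ℝ) * (ρ : ℝ) ^ 3 * 2 ≤ (ρ : ℝ) ^ 2 * K := by
        rw [hKr]
        have : (k : ℝ) * (ρ : ℝ) ^ 3 * 2 ≤ (k : ℝ) * (ρ : ℝ) ^ 3 * ρ :=
          mul_le_mul_of_nonneg_left hr2 (by positivity)
        nlinarith
      have h4 := mul_le_mul_of_nonneg_left h3 hlam0.le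
      linarith
    linarith
  · have h1 : (ρ : ℝ) ^ 3 * (1 / (64 * (ρ : ℝ) ^ 3 * (K : ℝ))) = 1 / (64 * K) := by
      field_simp
    rw [h1]
    have h2 : (ρ : ℝ) * lam ≤ 1 / (1024 * K) := by
      rw [le_div_iff₀ (by positivity)]
      have h3 : 0 ≤ (ρ : ℝ) * lam * K := by positivity
      have h4 := mul_le_mul_of_nonneg_left hr2 h3
      linarith
    have h5 : 1 / (64 * (K : ℝ)) = (1 / K) / 64 := by field_simp
    have h6 : 1 / (1024 * (K : ℝ)) = (1 / K) / 1024 := by field_simp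
    have h7 : 3 / (256 * (K : ℝ)) = (1 / K) * (3 / 256) := by field_simp
    have h8 : 1 / (32 * (K : ℝ)) = (1 / K) / 32 := by field_simp
    have h9 : 0 < 1 / (K : ℝ) := by positivity
    rw [h5, h8]
    rw [h6] at h2
    rw [h7] at hγ
    linarith
  · intro i _
    have h1 : ((A i).ncard : ℝ) ≤ Fintype.card V := by
      have := Set.ncard_le_card (A i)
      rw [Nat.card_eq_fintype_card] at this
      exact_mod_cast this
    refine h1.trans ?_
    have h2 : 3 / (256 * ((K : ℝ) * δ)) = (256 * (K : ℝ) * δ / 3)⁻¹ := by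
      rw [inv_div]; ring
    rw [h2, inv_pow, ← one_div, le_div_iff₀ (by positivity)]
    linarith


end PurePairs
end
end

section
/- Let K≥k≥1 be integers, let c>0 with K ≥ (2+1/c)(k−1), let ε,α>0, let B=(B_i : i∈I) be a blockade of length K in a graph G, and let A ⊆ V(G)∖∪_{i∈I}B_i cover ∪_{i∈I}B_i. Suppose that for each i∈I, the max-degree from A to B_i is less than ε|B_i|. Suppose also that there is no partition P of A into at most K^k sets such that for each X∈P there exists J⊆I with |J|=k where |N(X)∩B_j| < K^k·α·|B_j| for each j∈J. Then there exist X⊆A and J⊆I with |J|=k such that |G|^{-c}·α ≤ |N(X)∩B_i|/|B_i| < K^k·α + ε for each i∈J. -/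
noncomputable section

namespace PurePairs

open SimpleGraph

variable {V W : Type*}

/-! Helper lemmas for `statement_13`. -/

theorem aux_avg {V : Type} [DecidableEq V] (w : V → ℕ) (m : ℕ) :
    ∀ (s : ℕ) (X : Finset V), X.card = s → m ≤ s →
      ∃ Y ⊆ X, Y.card = m ∧ m * ∑ v ∈ X, w v ≤ s * ∑ v ∈ Y, w v := by
  intro s
  induction s with
  | zero =>
    intro X hX hm
    refine ⟨X, subset_rfl, by omega, ?_⟩
    have : m = 0 := by omega
    simp [this]
  | succ s ih =>
    intro X hX hm
    rcases Nat.lt_or_ge s m with h | h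
    · have hms : m = s + 1 := by omega
      exact ⟨X, subset_rfl, by omega, by rw [hms]⟩
    · have hne : X.Nonempty := by
        rw [← Finset.card_pos]; omega
      obtain ⟨v, hv, hvmin⟩ := Finset.exists_min_image X w hne
      have hcard : (X.erase v).card = s := by
        rw [Finset.card_erase_of_mem hv]; omega
      obtain ⟨Y, hYX, hYc, hY⟩ := ih (X.erase v) hcard h
      refine ⟨Y, hYX.trans (Finset.erase_subset _ _), hYc, ?_⟩
      have h1 : (s + 1) * w v ≤ ∑ u ∈ X, w u := by
        have := Finset.card_nsmul_le_sum X w (w v) hvmin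
        rw [hX] at this
        simpa using this
      have h2 : ∑ u ∈ X.erase v, w u + w v = ∑ u ∈ X, w u := Finset.sum_erase_add _ _ hv
      rcases Nat.eq_zero_or_pos s with h0 | h0
      · have : m = 0 := by omega
        simp [this]
      · set a := ∑ u ∈ X, w u
        set b := ∑ u ∈ X.erase v, w u
        set d := ∑ u ∈ Y, w u
        have h3 : s * a ≤ (s + 1) * b := by nlinarith
        have h4 : s * (m * a) ≤ s * ((s + 1) * d) := by
          calc s * (m * a) = m * (s * a) := by ring
            _ ≤ m * ((s + 1) * b) := Nat.mul_le_mul_left _ h3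
            _ = (s + 1) * (m * b) := by ring
            _ ≤ (s + 1) * (s * d) := Nat.mul_le_mul_left _ hY
            _ = s * ((s + 1) * d) := by ring
        exact Nat.le_of_mul_le_mul_left h4 h0

theorem aux_mono {V : Type} [Fintype V] (G : SimpleGraph V) (C : Set V) {X Y : Set V}
    (h : X ⊆ Y) : (nbhd G X ∩ C).ncard ≤ (nbhd G Y ∩ C).ncard := by
  apply Set.ncard_le_ncard _ (Set.toFinite _)
  rintro u ⟨⟨x, hx, hxu⟩, hu⟩
  exact ⟨⟨x, h hx, hxu⟩, hu⟩

theorem aux_union {V : Type} [Fintype V] (G : SimpleGraph V) (C : Set V) (X Y : Set V) :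
    (nbhd G (X ∪ Y) ∩ C).ncard ≤ (nbhd G X ∩ C).ncard + (nbhd G Y ∩ C).ncard := by
  refine le_trans (Set.ncard_le_ncard ?_ (Set.toFinite _)) (Set.ncard_union_le _ _)
  rintro u ⟨⟨x, hx | hx, hxu⟩, hu⟩
  · exact Or.inl ⟨⟨x, hx, hxu⟩, hu⟩
  · exact Or.inr ⟨⟨x, hx, hxu⟩, hu⟩

theorem aux_empty {V : Type} (G : SimpleGraph V) (C : Set V) :
    (nbhd G (∅ : Set V) ∩ C).ncard = 0 := by
  have : nbhd G (∅ : Set V) ∩ C = ∅ := by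
    ext u; simp [nbhd]
  rw [this]; simp

theorem aux_biUnion {V : Type} [Fintype V] (G : SimpleGraph V) (C : Set V)
    (J : Finset ℤ) (Y : ℤ → Set V) :
    (nbhd G (⋃ i ∈ J, Y i) ∩ C).ncard ≤ ∑ i ∈ J, (nbhd G (Y i) ∩ C).ncard := by
  classical
  induction J using Finset.induction_on with
  | empty => simp [aux_empty]
  | insert a J ha ih =>
    rw [Finset.sum_insert ha, Finset.set_biUnion_insert]
    exact (aux_union G C _ _).trans (Nat.add_le_add_left ih _)

theorem aux_sum {V : Type} [Fintype V] (G : SimpleGraph V) (C : Set V) (X : Finset V) :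
    (nbhd G (X : Set V) ∩ C).ncard ≤ ∑ v ∈ X, (nbhd G {v} ∩ C).ncard := by
  classical
  induction X using Finset.induction_on with
  | empty => simp [aux_empty]
  | insert a J ha ih =>
    rw [Finset.sum_insert ha, Finset.coe_insert, Set.insert_eq]
    exact (aux_union G C _ _).trans (Nat.add_le_add_left ih _)

/-- Averaging for neighbourhoods. -/
theorem aux_avg_nbhd {V : Type} [Fintype V] (G : SimpleGraph V) (C : Set V)
    (X : Finset V) (m : ℕ) (hm : m ≤ X.card) :
    ∃ Y ⊆ X, Y.card = m ∧
      m * (nbhd G (X : Set V) ∩ C).ncard ≤ X.card * (nbhd G (Y : Set V) ∩ C).ncard := by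
  classical
  have hch : ∀ u : V, ∃ v : V, u ∈ nbhd G (X : Set V) → v ∈ X ∧ G.Adj v u := by
    intro u
    by_cases hu : u ∈ nbhd G (X : Set V)
    · obtain ⟨x, hx, hxu⟩ := hu
      exact ⟨x, fun _ => ⟨hx, hxu⟩⟩
    · exact ⟨u, fun h => absurd h hu⟩
  choose g hg using hch
  set F : Finset V := (nbhd G (X : Set V) ∩ C).toFinset with hF
  set w : V → ℕ := fun v => (F.filter (fun u => g u = v)).card with hw
  obtain ⟨Y, hYX, hYc, hY⟩ := aux_avg w m X.card X rfl hm
  refine ⟨Y, hYX, hYc, ?_⟩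
  have h1 : (nbhd G (X : Set V) ∩ C).ncard = ∑ v ∈ X, w v := by
    rw [Set.ncard_eq_toFinset_card']
    apply Finset.card_eq_sum_card_fiberwise
    intro u hu
    have hu' : u ∈ nbhd G (X : Set V) ∩ C := by simpa using hu
    exact (hg u hu'.1).1
  have h2 : ∑ v ∈ Y, w v ≤ (nbhd G (Y : Set V) ∩ C).ncard := by
    rw [Set.ncard_eq_toFinset_card', hw, ← Finset.card_biUnion]
    · apply Finset.card_le_card
      intro u hu
      simp only [Finset.mem_biUnion, Finset.mem_filter] at hu
      obtain ⟨v, hv, huF, huv⟩ := hu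
      have hu' : u ∈ nbhd G (X : Set V) ∩ C := by simpa [hF] using huF
      have : u ∈ nbhd G (Y : Set V) ∩ C :=
        ⟨⟨v, hv, huv ▸ (hg u hu'.1).2⟩, hu'.2⟩
      simpa using this
    · intro a _ b _ hab
      rw [Function.onFun, Finset.disjoint_left]
      intro u h1 h2
      simp only [Finset.mem_filter] at h1 h2
      exact hab (h1.2.symm.trans h2.2)
  rw [h1]
  exact hY.trans (Nat.mul_le_mul_left _ h2)

theorem aux_count (I : Finset ℤ) (K : ℕ) (hI : I.card = K) :
    ∀ k : ℕ, 1 ≤ k → k ≤ K → (I.powerset.filter (fun D => D.card < k)).card ≤ K ^ k := by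
  intro k hk
  induction k, hk using Nat.le_induction with
  | base =>
    intro h
    have : I.powerset.filter (fun D => D.card < 1) ⊆ {∅} := by
      intro D hD
      simp at hD ⊢
      exact hD.2
    have := Finset.card_le_card this
    simp only [Finset.card_singleton] at this
    simpa using this.trans h
  | succ k hk ih =>
    intro h
    have hsub : I.powerset.filter (fun D => D.card < k + 1) ⊆
        I.powerset.filter (fun D => D.card < k) ∪ I.powersetCard k := by
      intro D hD
      simp only [Finset.mem_filter, Finset.mem_powerset, Finset.mem_union,
        Finset.mem_powersetCard] at hD ⊢
      rcases Nat.lt_or_ge D.card k with h | h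
      · exact Or.inl ⟨hD.1, h⟩
      · exact Or.inr ⟨hD.1, by omega⟩
    have h1 := (Finset.card_le_card hsub).trans (Finset.card_union_le _ _)
    rw [Finset.card_powersetCard, hI] at h1
    have h2 := ih (by omega)
    have h3 := Nat.choose_le_pow K k
    have h4 : 2 * K ^ k ≤ K ^ (k + 1) := by
      rw [pow_succ, mul_comm]
      exact Nat.mul_le_mul_left _ (by omega)
    omega

/-- Pigeonhole on scales. -/
theorem aux_pigeon (n k : ℕ) (hk : 1 ≤ k) (c : ℝ) (hc : 0 < c) (T : Finset ℤ)
    (hT1 : 1 ≤ T.card) (hT : (1 / c) * ((k : ℝ) - 1) ≤ (T.card : ℝ)) (m : ℤ → ℕ)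
    (hlo : ∀ i ∈ T, (n : ℝ) ^ c < m i) (hhi : ∀ i ∈ T, m i < n) :
    ∃ J ⊆ T, J.card = k ∧ ∀ i ∈ J, ∀ j ∈ J, (m i : ℝ) ≤ (n : ℝ) ^ c * m j := by
  obtain ⟨i0, hi0⟩ := Finset.card_pos.1 hT1
  have hm1 : ∀ i ∈ T, (1 : ℝ) ≤ m i := by
    intro i hi
    have h0 : (0 : ℝ) ≤ (n : ℝ) ^ c := by positivity
    have := lt_of_le_of_lt h0 (hlo i hi)
    have : 0 < m i := by exact_mod_cast this
    exact_mod_cast this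
  have hn2 : 1 < n := by
    have h := hm1 i0 hi0
    have h' : 1 ≤ m i0 := by exact_mod_cast h
    have := hhi i0 hi0
    omega
  have hnR : (1 : ℝ) < n := by exact_mod_cast hn2
  have hnc : (1 : ℝ) ≤ (n : ℝ) ^ c := Real.one_le_rpow hnR.le hc.le
  rcases Nat.eq_or_lt_of_le hk with h1 | h1
  · refine ⟨{i0}, by simpa using hi0, by simp [← h1], ?_⟩
    intro i hi j hj
    rw [Finset.mem_singleton] at hi hj
    rw [hi, hj]
    have := hm1 i0 hi0
    nlinarith
  have hlog : 0 < Real.log n := Real.log_pos hnR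
  set x : ℤ → ℝ := fun i => Real.log (m i) / (c * Real.log n) with hx
  have hcl : 0 < c * Real.log n := by positivity
  have hx1 : ∀ i ∈ T, 1 ≤ x i := by
    intro i hi
    rw [hx, le_div_iff₀ hcl, one_mul, ← Real.log_rpow (by linarith)]
    exact Real.log_le_log (by positivity) (hlo i hi).le
  have hx2 : ∀ i ∈ T, x i < 1 / c := by
    intro i hi
    rw [hx, div_lt_div_iff₀ hcl hc]
    have : Real.log (m i) < Real.log n :=
      Real.log_lt_log (by linarith [hm1 i hi]) (by exact_mod_cast hhi i hi)
    nlinarith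
  set p := ⌈1 / c⌉₊ with hp
  have hp0 : 0 < p := Nat.ceil_pos.2 (by positivity)
  have hp1 : (p : ℝ) - 1 < 1 / c := by
    have := Nat.ceil_lt_add_one (a := 1 / c) (by positivity)
    linarith
  have hmaps : ∀ i ∈ T, ⌊x i⌋₊ ∈ Finset.Ico 1 p := by
    intro i hi
    rw [Finset.mem_Ico]
    refine ⟨Nat.le_floor (by simpa using hx1 i hi), ?_⟩
    rw [Nat.floor_lt (by linarith [hx1 i hi])]
    exact lt_of_lt_of_le (hx2 i hi) (Nat.le_ceil _)
  have hlt : (Finset.Ico 1 p).card * (k - 1) < T.card := by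
    rw [Nat.card_Ico]
    have hk1 : (0 : ℝ) < (k : ℝ) - 1 := by
      have : (1 : ℝ) < k := by exact_mod_cast h1
      linarith
    have : (((p - 1) * (k - 1) : ℕ) : ℝ) < T.card := by
      rw [Nat.cast_mul, Nat.cast_sub hp0, Nat.cast_sub hk]
      push_cast
      exact lt_of_lt_of_le (mul_lt_mul_of_pos_right hp1 hk1) hT
    exact_mod_cast this
  obtain ⟨t, _, ht⟩ := Finset.exists_lt_card_fiber_of_mul_lt_card_of_maps_to hmaps hlt
  obtain ⟨J, hJ, hJc⟩ := Finset.exists_subset_card_eq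
    (show k ≤ (T.filter (fun i => ⌊x i⌋₊ = t)).card by omega)
  refine ⟨J, hJ.trans (Finset.filter_subset _ _), hJc, ?_⟩
  intro i hi j hj
  obtain ⟨hiT, hit⟩ := Finset.mem_filter.1 (hJ hi)
  obtain ⟨hjT, hjt⟩ := Finset.mem_filter.1 (hJ hj)
  have hxi : x i < t + 1 := by rw [← hit]; exact Nat.lt_floor_add_one _
  have hxj : (t : ℝ) ≤ x j := by rw [← hjt]; exact Nat.floor_le (by linarith [hx1 j hjT])
  have hmi := hm1 i hiT
  have hmj := hm1 j hjT
  have h5 : Real.log (m i) = x i * (c * Real.log n) := by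
    rw [hx]; field_simp
  have h6 : Real.log (m j) = x j * (c * Real.log n) := by
    rw [hx]; field_simp
  rw [← Real.log_le_log_iff (by linarith) (by positivity),
    Real.log_mul (by positivity) (by linarith), Real.log_rpow (by linarith), h5, h6]
  nlinarith

/-- selective covering. -/
theorem statement_13 {V : Type} [Fintype V] (G : SimpleGraph V)
    (K k : ℕ) (hk : 1 ≤ k) (hKk : k ≤ K)
    (c : ℝ) (hc : 0 < c) (hK : (2 + 1/c) * ((k : ℝ) - 1) ≤ (K : ℝ))
    (ε α : ℝ) (hε : 0 < ε) (hα : 0 < α)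
    (I : Finset ℤ) (B : ℤ → Set V) (hB : IsBlockade I B) (hlen : I.card = K)
    (A : Set V) (hAdisj : Disjoint A (⋃ i ∈ I, B i))
    (hcov : Covers G A (⋃ i ∈ I, B i))
    (hmax : ∀ i ∈ I, ∀ v ∈ A,
      ((G.neighborSet v ∩ B i).ncard : ℝ) < ε * ((B i).ncard : ℝ))
    (hnopart : ¬ ∃ (n : ℕ) (f : ℕ → Set V), n ≤ K ^ k ∧
        (∀ t < n, f t ⊆ A) ∧ (∀ s < n, ∀ t < n, s ≠ t → Disjoint (f s) (f t)) ∧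
        (A ⊆ ⋃ t ∈ Finset.range n, f t) ∧
        ∀ t < n, ∃ J ⊆ I, J.card = k ∧
          ∀ j ∈ J, ((nbhd G (f t) ∩ B j).ncard : ℝ) <
            (K : ℝ) ^ k * α * ((B j).ncard : ℝ)) :
    ∃ X ⊆ A, ∃ J ⊆ I, J.card = k ∧
      ∀ i ∈ J,
        (Fintype.card V : ℝ) ^ (-c) * α ≤
          ((nbhd G X ∩ B i).ncard : ℝ) / ((B i).ncard : ℝ) ∧
        ((nbhd G X ∩ B i).ncard : ℝ) / ((B i).ncard : ℝ) < (K : ℝ) ^ k * α + ε := by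
  classical
  set n : ℕ := Fintype.card V with hn
  have hbpos : ∀ i ∈ I, (0 : ℝ) < ((B i).ncard : ℝ) := by
    intro i hi
    exact_mod_cast (Set.ncard_pos (Set.toFinite _)).2 (hB.1 i hi)
  have hK1 : 1 ≤ K := hk.trans hKk
  have hKR : (1 : ℝ) ≤ (K : ℝ) ^ k := one_le_pow₀ (by exact_mod_cast hK1)
  have hKα : α ≤ (K : ℝ) ^ k * α := by nlinarith
  have hsing : ∀ v, nbhd G {v} = G.neighborSet v := by
    intro v; ext u; simp [nbhd]
  set β : ℝ := (n : ℝ) ^ (-c) * α with hβ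
  have hβ0 : 0 ≤ β := by positivity
  set D : V → Finset ℤ := fun v =>
    I.filter (fun i => β * ((B i).ncard : ℝ) ≤ ((nbhd G {v} ∩ B i).ncard : ℝ)) with hD
  by_cases hDk : ∃ v ∈ A, k ≤ (D v).card
  · obtain ⟨v, hvA, hv⟩ := hDk
    obtain ⟨J, hJ, hJc⟩ := Finset.exists_subset_card_eq hv
    refine ⟨{v}, by simpa using hvA, J, hJ.trans (Finset.filter_subset _ _), hJc, ?_⟩
    intro i hi
    obtain ⟨hiI, hi2⟩ := Finset.mem_filter.1 (hJ hi)
    have hb := hbpos i hiI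
    refine ⟨(le_div_iff₀ hb).2 hi2, ?_⟩
    rw [div_lt_iff₀ hb, hsing]
    have := hmax i hiI v hvA
    nlinarith
  push Not at hDk
  -- find a bad part
  obtain ⟨D0, hD0c, hbad⟩ : ∃ D0 : Finset ℤ, D0.card < k ∧ ¬ ∃ J ⊆ I, J.card = k ∧
      ∀ j ∈ J, ((nbhd G {v | v ∈ A ∧ D v = D0} ∩ B j).ncard : ℝ) <
            (K : ℝ) ^ k * α * ((B j).ncard : ℝ) := by
    by_contra hcon
    push Not at hcon
    apply hnopart
    set F := I.powerset.filter (fun D => D.card < k) with hF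
    let e := F.equivFin
    refine ⟨F.card, fun t => if h : t < F.card then
      {v | v ∈ A ∧ D v = (e.symm ⟨t, h⟩ : Finset ℤ)} else ∅, aux_count I K hlen k hk hKk,
      ?_, ?_, ?_, ?_⟩
    · intro t ht
      simp only [ht, dif_pos]
      exact fun v hv => hv.1
    · intro s hs t ht hst
      simp only [hs, ht, dif_pos]
      rw [Set.disjoint_left]
      rintro v ⟨_, h1⟩ ⟨_, h2⟩
      have h3 := e.symm.injective (Subtype.ext (h1.symm.trans h2))
      exact hst (Fin.mk.inj_iff.1 h3)
    · intro v hv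
      have hvF : D v ∈ F := by
        rw [hF, Finset.mem_filter, Finset.mem_powerset]
        exact ⟨Finset.filter_subset _ _, hDk v hv⟩
      rw [Set.mem_iUnion₂]
      refine ⟨(e ⟨D v, hvF⟩ : ℕ), Finset.mem_range.2 (e ⟨D v, hvF⟩).2, ?_⟩
      simp [hv]
    · intro t ht
      simp only [ht, dif_pos]
      have := (e.symm ⟨t, ht⟩).2
      exact hcon _ (Finset.mem_filter.1 this).2
  set A' : Set V := {v | v ∈ A ∧ D v = D0} with hA'
  set S : Finset ℤ := I.filter (fun i => ((nbhd G A' ∩ B i).ncard : ℝ) <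
            (K : ℝ) ^ k * α * ((B i).ncard : ℝ)) with hS
  have hSc : S.card < k := by
    by_contra h
    push Not at h
    obtain ⟨J, hJ, hJc⟩ := Finset.exists_subset_card_eq h
    exact hbad ⟨J, hJ.trans (Finset.filter_subset _ _), hJc,
      fun j hj => (Finset.mem_filter.1 (hJ hj)).2⟩
  set T : Finset ℤ := I \ (D0 ∪ S) with hT
  have hTI : T ⊆ I := Finset.sdiff_subset
  have hTc : K ≤ T.card + 2 * (k - 1) := by
    have h1 : I.card - (D0 ∪ S).card ≤ T.card := Finset.le_card_sdiff _ _
    have h2 := Finset.card_union_le D0 S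
    omega
  have hTR : (1 / c) * ((k : ℝ) - 1) ≤ (T.card : ℝ) := by
    have : (K : ℝ) ≤ T.card + 2 * ((k : ℝ) - 1) := by
      have h : ((K : ℕ) : ℝ) ≤ ((T.card + 2 * (k - 1) : ℕ) : ℝ) := by exact_mod_cast hTc
      rw [Nat.cast_add, Nat.cast_mul, Nat.cast_sub hk] at h
      simpa using h
    linarith
  have hT1 : 1 ≤ T.card := by
    rcases Nat.eq_or_lt_of_le hk with h | h
    · omega
    · have hk1 : (0 : ℝ) < (k : ℝ) - 1 := by
        have : (1 : ℝ) < k := by exact_mod_cast h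
        linarith
      have : (0 : ℝ) < T.card := lt_of_lt_of_le (by positivity) hTR
      exact_mod_cast this
  have hdeg : ∀ i ∈ T, ∀ v ∈ A', ((nbhd G {v} ∩ B i).ncard : ℝ) < β * ((B i).ncard : ℝ) := by
    intro i hi v hv
    by_contra h
    push Not at h
    have h1 : i ∈ D v := Finset.mem_filter.2 ⟨hTI hi, h⟩
    rw [hv.2] at h1
    exact (Finset.mem_sdiff.1 hi).2 (Finset.mem_union_left _ h1)
  have hbig : ∀ i ∈ T, α * ((B i).ncard : ℝ) ≤ ((nbhd G A' ∩ B i).ncard : ℝ) := by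
    intro i hi
    by_contra h
    push Not at h
    have h1 : i ∈ S := Finset.mem_filter.2 ⟨hTI hi, h.trans_le
      (mul_le_mul_of_nonneg_right hKα (hbpos i (hTI hi)).le)⟩
    exact (Finset.mem_sdiff.1 hi).2 (Finset.mem_union_right _ h1)
  -- minimum sizes
  have hmin : ∀ i : ℤ, ∃ X : Finset V, i ∈ T → (X : Set V) ⊆ A' ∧
      α * ((B i).ncard : ℝ) ≤ ((nbhd G (X : Set V) ∩ B i).ncard : ℝ) ∧
      ∀ Z : Finset V, (Z : Set V) ⊆ A' → Z.card < X.card →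
        ((nbhd G (Z : Set V) ∩ B i).ncard : ℝ) < α * ((B i).ncard : ℝ) := by
    intro i
    by_cases hi : i ∈ T
    · obtain ⟨X, hX, hXmin⟩ := Finset.exists_min_image
        (Finset.univ.filter (fun X : Finset V => (X : Set V) ⊆ A' ∧
          α * ((B i).ncard : ℝ) ≤ ((nbhd G (X : Set V) ∩ B i).ncard : ℝ))) Finset.card
        ⟨A'.toFinset, by simpa using hbig i hi⟩
      rw [Finset.mem_filter] at hX
      refine ⟨X, fun _ => ⟨hX.2.1, hX.2.2, ?_⟩⟩
      intro Z hZ hZc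
      by_contra h
      push Not at h
      have := hXmin Z (Finset.mem_filter.2 ⟨Finset.mem_univ _, hZ, h⟩)
      omega
    · exact ⟨∅, fun h => absurd h hi⟩
  choose X hX using hmin
  have hnpos : 0 < n := by
    obtain ⟨i0, hi0⟩ := Finset.card_pos.1 hT1
    obtain ⟨v, hv⟩ := hB.1 i0 (hTI hi0)
    exact Fintype.card_pos_iff.2 ⟨v⟩
  have hnR : (0 : ℝ) < n := by exact_mod_cast hnpos
  have hXne : ∀ i ∈ T, 0 < (X i).card := by
    intro i hi
    rcases Nat.eq_zero_or_pos (X i).card with h | h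
    · exfalso
      have h1 := (hX i hi).2.1
      rw [Finset.card_eq_zero.1 h, Finset.coe_empty, aux_empty] at h1
      have := mul_pos hα (hbpos i (hTI hi))
      simp at h1
      linarith
    · exact h
  have hlo : ∀ i ∈ T, (n : ℝ) ^ c < (X i).card := by
    intro i hi
    have hb := hbpos i (hTI hi)
    have h1 : ((nbhd G (X i : Set V) ∩ B i).ncard : ℝ) ≤
        ∑ v ∈ X i, ((nbhd G {v} ∩ B i).ncard : ℝ) := by
      exact_mod_cast aux_sum G (B i) (X i)
    have h2 : ∑ v ∈ X i, ((nbhd G {v} ∩ B i).ncard : ℝ) <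
        ∑ v ∈ X i, β * ((B i).ncard : ℝ) :=
      Finset.sum_lt_sum_of_nonempty (Finset.card_pos.1 (hXne i hi))
        (fun v hv => hdeg i hi v ((hX i hi).1 hv))
    rw [Finset.sum_const, nsmul_eq_mul] at h2
    have h3 := ((hX i hi).2.1.trans h1).trans_lt h2
    have h4 : α * ((B i).ncard : ℝ) < (((X i).card : ℝ) * (n : ℝ) ^ (-c)) *
        (α * ((B i).ncard : ℝ)) := by
      rw [hβ] at h3; linarith
    have h5 : 1 < ((X i).card : ℝ) * (n : ℝ) ^ (-c) := by
      have := mul_pos hα hb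
      by_contra h
      push Not at h
      nlinarith
    rw [Real.rpow_neg hnR.le, ← div_eq_mul_inv, lt_div_iff₀ (by positivity), one_mul] at h5
    exact h5
  have hhi : ∀ i ∈ T, (X i).card < n := by
    intro i hi
    obtain ⟨v, hv⟩ := hB.1 i (hTI hi)
    rw [hn, Finset.card_lt_iff_ne_univ]
    intro h
    have h1 : v ∈ A' := (hX i hi).1 (by rw [h]; simp)
    exact Set.disjoint_left.1 hAdisj h1.1 (Set.mem_biUnion (hTI hi) hv)
  obtain ⟨J, hJT, hJc, hJ⟩ := aux_pigeon n k hk c hc T hT1 hTR (fun i => (X i).card) hlo hhi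
  obtain ⟨i0, hi0, hi0min⟩ := Finset.exists_min_image J (fun i => (X i).card)
    (Finset.card_pos.1 (by omega))
  set m := (X i0).card with hm
  have hm0 : 0 < m := hXne i0 (hJT hi0)
  have hY : ∀ i : ℤ, ∃ Y : Finset V, i ∈ J → Y ⊆ X i ∧ Y.card = m ∧
      m * (nbhd G (X i : Set V) ∩ B i).ncard ≤
        (X i).card * (nbhd G (Y : Set V) ∩ B i).ncard := by
    intro i
    by_cases hi : i ∈ J
    · obtain ⟨Y, h⟩ := aux_avg_nbhd G (B i) (X i) m (hi0min i hi)
      exact ⟨Y, fun _ => h⟩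
    · exact ⟨∅, fun h => absurd h hi⟩
  choose Y hY using hY
  have hYA' : ∀ i ∈ J, (Y i : Set V) ⊆ A' := fun i hi v hv =>
    (hX i (hJT hi)).1 ((hY i hi).1 hv)
  have hup : ∀ i ∈ J, ∀ j ∈ J, ∃ v ∈ A', ((nbhd G (Y i : Set V) ∩ B j).ncard : ℝ) <
      α * ((B j).ncard : ℝ) + ((nbhd G {v} ∩ B j).ncard : ℝ) := by
    intro i hi j hj
    obtain ⟨v, hv⟩ := Finset.card_pos.1 (show 0 < (Y i).card by rw [(hY i hi).2.1]; exact hm0)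
    refine ⟨v, hYA' i hi hv, ?_⟩
    have h1 := aux_union G (B j) (((Y i).erase v : Finset V) : Set V) {v}
    have h2 : (((Y i).erase v : Finset V) : Set V) ∪ {v} = (Y i : Set V) := by
      rw [Finset.coe_erase, Set.sdiff_union_self, Set.union_eq_left]
      simpa using hv
    rw [h2] at h1
    have h3 := (hX j (hJT hj)).2.2 ((Y i).erase v)
      (fun u hu => hYA' i hi (Finset.mem_of_mem_erase hu)) (by
        have h5 := Finset.card_erase_of_mem hv
        have h6 := (hY i hi).2.1
        have h7 := hi0min j hj
        change m ≤ (X j).card at h7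
        omega)
    have h4 : ((nbhd G (Y i : Set V) ∩ B j).ncard : ℝ) ≤
      ((nbhd G (((Y i).erase v : Finset V) : Set V) ∩ B j).ncard : ℝ) +
        ((nbhd G {v} ∩ B j).ncard : ℝ) := by exact_mod_cast h1
    linarith
  have hβα : β ≤ α := by
    have : (n : ℝ) ^ (-c) ≤ 1 :=
      Real.rpow_le_one_of_one_le_of_nonpos (by exact_mod_cast hnpos) (by linarith)
    rw [hβ]; nlinarith
  refine ⟨⋃ i ∈ J, (Y i : Set V), ?_, J, hJT.trans hTI, hJc, ?_⟩
  · intro v hv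
    obtain ⟨i, hi, hv⟩ := Set.mem_iUnion₂.1 hv
    exact (hYA' i hi hv).1
  intro j hj
  have hb := hbpos j (hTI (hJT hj))
  constructor
  · rw [le_div_iff₀ hb]
    have h1 : ((nbhd G (Y j : Set V) ∩ B j).ncard : ℝ) ≤
        ((nbhd G (⋃ i ∈ J, (Y i : Set V)) ∩ B j).ncard : ℝ) := by
      exact_mod_cast aux_mono G (B j) (Set.subset_biUnion_of_mem (u := fun i => (Y i : Set V)) hj)
    refine le_trans ?_ h1
    have h2 : (m : ℝ) * ((nbhd G (X j : Set V) ∩ B j).ncard : ℝ) ≤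
        ((X j).card : ℝ) * ((nbhd G (Y j : Set V) ∩ B j).ncard : ℝ) := by
      exact_mod_cast (hY j hj).2.2
    have h3 : ((X j).card : ℝ) ≤ (n : ℝ) ^ c * m := hJ j hj i0 hi0
    have h4 := (hX j (hJT hj)).2.1
    have hmR : (0 : ℝ) < m := by exact_mod_cast hm0
    set y : ℝ := ((nbhd G (Y j : Set V) ∩ B j).ncard : ℝ)
    have hy0 : 0 ≤ y := Nat.cast_nonneg _
    have h5 : (m : ℝ) * (α * ((B j).ncard : ℝ)) ≤ m * ((n : ℝ) ^ c * y) := by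
      calc (m : ℝ) * (α * ((B j).ncard : ℝ)) ≤ m * _ := mul_le_mul_of_nonneg_left h4 hmR.le
        _ ≤ _ := h2
        _ ≤ (n : ℝ) ^ c * m * y := mul_le_mul_of_nonneg_right h3 hy0
        _ = _ := by ring
    have h6 := le_of_mul_le_mul_left h5 hmR
    rw [hβ, Real.rpow_neg hnR.le, mul_assoc, inv_mul_le_iff₀ (by positivity)]
    exact h6
  · rw [div_lt_iff₀ hb]
    have h1 : ((nbhd G (⋃ i ∈ J, (Y i : Set V)) ∩ B j).ncard : ℝ) ≤
        ∑ i ∈ J, ((nbhd G (Y i : Set V) ∩ B j).ncard : ℝ) := by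
      exact_mod_cast aux_biUnion G (B j) J (fun i => (Y i : Set V))
    refine h1.trans_lt ?_
    rcases Nat.eq_or_lt_of_le hk with h | h
    · obtain ⟨a, rfl⟩ := Finset.card_eq_one.1 (hJc.trans h.symm)
      rw [Finset.sum_singleton]
      obtain ⟨v, hv, hlt⟩ := hup a (by simp) j hj
      have h2 := hmax j (hTI (hJT hj)) v hv.1
      rw [hsing] at hlt
      nlinarith
    · have h2 : ∀ i ∈ J, ((nbhd G (Y i : Set V) ∩ B j).ncard : ℝ) ≤
          2 * α * ((B j).ncard : ℝ) := by
        intro i hi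
        obtain ⟨v, hv, hlt⟩ := hup i hi j hj
        have h3 := hdeg j (hJT hj) v hv
        nlinarith
      have h3 := Finset.sum_le_card_nsmul J _ _ h2
      rw [hJc, nsmul_eq_mul] at h3
      have h4 : 2 * k ≤ K ^ k := by
        calc 2 * k ≤ K * K := Nat.mul_le_mul (by omega) hKk
          _ = K ^ 2 := by ring
          _ ≤ K ^ k := Nat.pow_le_pow_right hK1 h
      have h4R : 2 * (k : ℝ) ≤ (K : ℝ) ^ k := by exact_mod_cast h4
      have h5 : 0 < α * ((B j).ncard : ℝ) := mul_pos hα hb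
      have h6 : 0 < ε * ((B j).ncard : ℝ) := mul_pos hε hb
      nlinarith

end PurePairs
end
end
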